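/- arXiv:1403.6521 — 4 statements merged into one kernel-verified Lean document; each statement's English description precedes it below -/
import Mathlib

section
/- Let d_0 := n(q^m−1). For every composition α of n and every 0 ≤ i ≤ d_0, the F_q-dimension of the P_α-fixed subspace of the degree-i component Q_i equals the F_q-dimension of the P_α-cofixed quotient of the degree-(d_0−i) component Q_{d_0−i}; that is, dim_{F_q} (Q_i)^{P_α} = dim_{F_q} (Q_{d_0−i})_{P_α}. -/
open Finset Matrix MvPolynomial

/-- Partial sums: `psum f i = f 0 + f 1 + ⋯ + f (i-1)`. -/
def psum (f : ℕ → ℕ) (i : ℕ) : ℕ := ∑ j ∈ Finset.range i, f j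

/-- The action of a matrix `g` on `F_q[x_1,…,x_n]` by linear substitution of the variables:
`x_i ↦ Σ_j g_{ij} x_j`. -/
noncomputable def lsub {n : ℕ} {Fq : Type} [Field Fq] (g : Matrix (Fin n) (Fin n) Fq) :
    MvPolynomial (Fin n) Fq →ₐ[Fq] MvPolynomial (Fin n) Fq :=
  MvPolynomial.aeval fun i => ∑ j, MvPolynomial.C (g i j) * MvPolynomial.X j

/-- The parabolic subgroup `P_α ⊆ GL_n(F_q)` of invertible block upper-triangular matrices with
diagonal blocks of sizes `α_0, …, α_{ℓ-1}`: the entry in row `r`, column `s` vanishes whenever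
`s < A_i ≤ r` for some partial sum `A_i` of `α`. -/
def Pa (Fq : Type) [Field Fq] (n ℓ : ℕ) (α : ℕ → ℕ) : Set (GL (Fin n) Fq) :=
  {g | ∀ r s : Fin n, ∀ i ≤ ℓ, (s : ℕ) < psum α i → psum α i ≤ (r : ℕ) →
        (g : Matrix (Fin n) (Fin n) Fq) r s = 0}

/-- The Frobenius power `𝔪^{[Q]} = (x_1^Q, …, x_n^Q)` of the irrelevant ideal, as an
`F_q`-submodule of `F_q[x_1,…,x_n]`. -/
noncomputable def frobPow (Fq : Type) [Field Fq] (n Q : ℕ) :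
    Submodule Fq (MvPolynomial (Fin n) Fq) :=
  Submodule.restrictScalars Fq
    (Ideal.span (Set.range fun i : Fin n => (MvPolynomial.X i : MvPolynomial (Fin n) Fq) ^ Q))

/-- The space of degree-`d` homogeneous polynomials `f` whose class in `S/𝔪^{[Q]}` is fixed
by every element of `H`, i.e. `g(f) − f ∈ 𝔪^{[Q]}` for all `g ∈ H`. -/
noncomputable def fixDeg (Fq : Type) [Field Fq] (n Q : ℕ) (H : Set (GL (Fin n) Fq)) (d : ℕ) :
    Submodule Fq (MvPolynomial (Fin n) Fq) :=
  MvPolynomial.homogeneousSubmodule (Fin n) Fq d ⊓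
    ⨅ g ∈ H,
      Submodule.comap
        ((lsub ((g : GL (Fin n) Fq) : Matrix (Fin n) (Fin n) Fq)).toLinearMap - LinearMap.id)
        (frobPow Fq n Q)

/-- The degree-`d` homogeneous component `Q_d` of `Q = S/𝔪^{[Q]}` (image of the degree-`d`
homogeneous polynomials). -/
noncomputable def Qdeg (Fq : Type) [Field Fq] (n Q d : ℕ) :
    Submodule Fq (MvPolynomial (Fin n) Fq ⧸ frobPow Fq n Q) :=
  Submodule.map (frobPow Fq n Q).mkQ (MvPolynomial.homogeneousSubmodule (Fin n) Fq d)

/-- The span of `{g(x) − x : g ∈ H, x ∈ Q_d}` inside `Q = S/𝔪^{[Q]}`. -/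
noncomputable def Ncof (Fq : Type) [Field Fq] (n Q : ℕ) (H : Set (GL (Fin n) Fq)) (d : ℕ) :
    Submodule Fq (MvPolynomial (Fin n) Fq ⧸ frobPow Fq n Q) :=
  Submodule.span Fq
    {y | ∃ g ∈ H, ∃ f ∈ MvPolynomial.homogeneousSubmodule (Fin n) Fq d,
      y = (frobPow Fq n Q).mkQ
            (lsub ((g : GL (Fin n) Fq) : Matrix (Fin n) (Fin n) Fq) f - f)}

namespace CDD

/-- The top exponent vector. -/
noncomputable def top (n Q : ℕ) : Fin n →₀ ℕ := Finsupp.equivFunOnFinite.symm fun _ => Q - 1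

lemma top_apply (n Q : ℕ) (k : Fin n) : top n Q k = Q - 1 := rfl

lemma mem_frobPow {Fq : Type} [Field Fq] {n Q : ℕ} (f : MvPolynomial (Fin n) Fq) :
    f ∈ frobPow Fq n Q ↔ ∀ e ∈ f.support, ∃ k, Q ≤ e k := by
  have h : (Set.range fun i : Fin n => (X i : MvPolynomial (Fin n) Fq) ^ Q)
      = (fun s => monomial s (1 : Fq)) '' (Set.range fun i : Fin n => Finsupp.single i Q) := by
    rw [← Set.range_comp]
    congr 1
    funext i
    simp [X_pow_eq_monomial]
  rw [frobPow, Submodule.restrictScalars_mem, h, mem_ideal_span_monomial_image]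
  simp

lemma mul_mem_frobPow {Fq : Type} [Field Fq] {n Q : ℕ} (f g : MvPolynomial (Fin n) Fq)
    (hg : g ∈ frobPow Fq n Q) : f * g ∈ frobPow Fq n Q := by
  rw [frobPow, Submodule.restrictScalars_mem] at *
  exact Ideal.mul_mem_left _ _ hg

lemma X_pow_mem {Fq : Type} [Field Fq] {n Q : ℕ} (k : Fin n) :
    (X k : MvPolynomial (Fin n) Fq) ^ Q ∈ frobPow Fq n Q := by
  rw [frobPow, Submodule.restrictScalars_mem]
  exact Ideal.subset_span ⟨k, rfl⟩

lemma coeff_top_eq_zero {Fq : Type} [Field Fq] {n Q : ℕ} (hQ : 0 < Q)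
    (f : MvPolynomial (Fin n) Fq) (hf : f ∈ frobPow Fq n Q) : coeff (top n Q) f = 0 := by
  by_contra h
  obtain ⟨k, hk⟩ := (mem_frobPow f).1 hf _ (mem_support_iff.2 h)
  rw [top_apply] at hk
  omega

lemma degree_eq {n : ℕ} (e : Fin n →₀ ℕ) : e.degree = ∑ k, e k := by
  rw [Finsupp.degree_eq_sum]

lemma degree_top (n Q : ℕ) : (top n Q).degree = n * (Q - 1) := by
  simp [degree_eq, top_apply]

lemma lsub_X {Fq : Type} [Field Fq] {n : ℕ} (g : Matrix (Fin n) (Fin n) Fq) (i : Fin n) :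
    lsub g (X i) = ∑ j, C (g i j) * X j := by simp [lsub]

lemma lsub_hom {Fq : Type} [Field Fq] {n d : ℕ} (g : Matrix (Fin n) (Fin n) Fq)
    (f : MvPolynomial (Fin n) Fq) (hf : f.IsHomogeneous d) : (lsub g f).IsHomogeneous d := by
  have := hf.aeval (S := Fq) (n := 1) (fun i => ∑ j, C (g i j) * X j) (fun i => by
    apply IsHomogeneous.sum
    intro j _
    exact (isHomogeneous_X Fq j).C_mul _)
  simpa [lsub] using this

lemma lsub_mul {Fq : Type} [Field Fq] {n : ℕ} (A B : Matrix (Fin n) (Fin n) Fq)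
    (f : MvPolynomial (Fin n) Fq) : lsub (A * B) f = lsub B (lsub A f) := by
  have : lsub (A * B) = (lsub B).comp (lsub A) := by
    apply MvPolynomial.algHom_ext
    intro i
    have hC : ∀ c : Fq, lsub B (C c) = C c := fun c => (lsub B).commutes c
    simp only [AlgHom.comp_apply, lsub_X, map_sum, map_mul, hC, Matrix.mul_apply, Finset.sum_mul,
      Finset.mul_sum]
    rw [Finset.sum_comm]
    simp only [mul_assoc]
  rw [this]; rfl

lemma lsub_one {Fq : Type} [Field Fq] {n : ℕ} (f : MvPolynomial (Fin n) Fq) :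
    lsub (1 : Matrix (Fin n) (Fin n) Fq) f = f := by
  have : lsub (1 : Matrix (Fin n) (Fin n) Fq) = AlgHom.id _ _ := by
    apply MvPolynomial.algHom_ext
    intro i
    rw [lsub_X]
    simp [Matrix.one_apply]
  rw [this]; rfl

lemma lsub_mem {Fq : Type} [Field Fq] {n Q : ℕ}
    (hsum : ∀ v : Fin n → MvPolynomial (Fin n) Fq, (∑ i, v i) ^ Q = ∑ i, v i ^ Q)
    (g : Matrix (Fin n) (Fin n) Fq)
    (f : MvPolynomial (Fin n) Fq) (hf : f ∈ frobPow Fq n Q) : lsub g f ∈ frobPow Fq n Q := by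
  rw [frobPow, Submodule.restrictScalars_mem] at *
  have : Ideal.span (Set.range fun i : Fin n => (X i : MvPolynomial (Fin n) Fq) ^ Q) ≤
      Ideal.comap (lsub g)
        (Ideal.span (Set.range fun i : Fin n => (X i : MvPolynomial (Fin n) Fq) ^ Q)) := by
    rw [Ideal.span_le]
    rintro _ ⟨i, rfl⟩
    simp only [SetLike.mem_coe, Ideal.mem_comap, map_pow, lsub_X, hsum, mul_pow]
    exact Ideal.sum_mem _ fun j _ => Ideal.mul_mem_left _ _ (Ideal.subset_span ⟨j, rfl⟩)
  exact this hf

/-- Reduction of invariance to the top monomial. -/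
lemma inv_of_top {Fq : Type} [Field Fq] {n Q : ℕ} (hQ : 0 < Q)
    (hsum : ∀ v : Fin n → MvPolynomial (Fin n) Fq, (∑ i, v i) ^ Q = ∑ i, v i ^ Q)
    (g : Matrix (Fin n) (Fin n) Fq)
    (h : coeff (top n Q) (lsub g (monomial (top n Q) 1)) = 1) (f : MvPolynomial (Fin n) Fq) :
    coeff (top n Q) (lsub g f) = coeff (top n Q) f := by
  classical
  induction f using MvPolynomial.induction_on' with
  | add p q hp hq => simp only [map_add, coeff_add, hp, hq]
  | monomial e c =>
    by_cases he : e = top n Q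
    · subst he
      have : monomial (top n Q) c = c • monomial (top n Q) (1 : Fq) := by
        simp [smul_monomial]
      rw [this, map_smul, coeff_smul, h, coeff_smul, coeff_monomial, if_pos rfl]
    · rw [coeff_monomial, if_neg he]
      by_cases hk : ∃ k, Q ≤ e k
      · apply coeff_top_eq_zero hQ
        apply lsub_mem hsum
        rw [mem_frobPow]
        intro e' he'
        have := support_monomial_subset he'
        rw [Finset.mem_singleton] at this
        subst this
        exact hk
      · push Not at hk
        refine (lsub_hom g _ (isHomogeneous_monomial c rfl)).coeff_eq_zero ?_
        rw [degree_top, degree_eq]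
        intro hd
        apply he
        have hle : ∀ k ∈ Finset.univ, e k ≤ top n Q k := fun k _ => by
          rw [top_apply]; have := hk k; omega
        have hs : ∑ k, e k = ∑ k, top n Q k := by simp [← hd, top_apply]
        have := (Finset.sum_eq_sum_iff_of_le hle).1 hs
        ext k
        exact this k (Finset.mem_univ _)

lemma monomial_top {Fq : Type} [Field Fq] {n Q : ℕ} :
    monomial (top n Q) (1 : Fq) = ∏ k, X k ^ (Q - 1) := by
  rw [monomial_eq, Finsupp.prod_fintype _ _ (by simp)]
  simp [top_apply]

lemma invariant {Fq : Type} [Field Fq] {n Q : ℕ} (hQ : 0 < Q)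
    (hsum : ∀ v : Fin n → MvPolynomial (Fin n) Fq, (∑ i, v i) ^ Q = ∑ i, v i ^ Q)
    (hfer : ∀ c : Fq, c ≠ 0 → c ^ (Q - 1) = 1)
    (g : Matrix (Fin n) (Fin n) Fq) (hg : g.det ≠ 0) :
    ∀ f : MvPolynomial (Fin n) Fq, coeff (top n Q) (lsub g f) = coeff (top n Q) f := by
  classical
  have h1 : coeff (top n Q) (monomial (top n Q) (1 : Fq)) = 1 := by
    rw [coeff_monomial, if_pos rfl]
  refine diagonal_transvection_induction_of_det_ne_zero
    (fun g => ∀ f : MvPolynomial (Fin n) Fq, coeff (top n Q) (lsub g f) = coeff (top n Q) f)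
    g hg ?_ ?_ ?_
  · intro D hD
    apply inv_of_top hQ hsum
    have hX : ∀ i, lsub (diagonal D) (X i) = C (D i) * X i := by
      intro i
      rw [lsub_X, Finset.sum_eq_single i]
      · simp
      · intro j _ hj
        simp [diagonal_apply_ne' _ hj]
      · simp
    rw [det_diagonal, Finset.prod_ne_zero_iff] at hD
    have : lsub (diagonal D) (monomial (top n Q) 1) = monomial (top n Q) (1 : Fq) := by
      simp only [monomial_top, map_prod, map_pow, hX, mul_pow]
      refine Finset.prod_congr rfl fun k hk => ?_
      rw [← C_pow, hfer _ (hD k hk), C_1, one_mul]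
    rw [this, h1]
  · intro t
    apply inv_of_top hQ hsum
    obtain ⟨i, j, hij, c⟩ := t
    simp only [TransvectionStruct.toMatrix_mk]
    have hXi : lsub (transvection i j c) (X i) = X i + C c * X j := by
      rw [lsub_X]
      simp only [transvection, Matrix.add_apply, Matrix.one_apply, Matrix.single_apply, true_and,
        map_add, add_mul, Finset.sum_add_distrib]
      congr 1
      · simp
      · rw [Finset.sum_eq_single j]
        · simp
        · intro x _ hx
          simp [hx.symm]
        · simp
    have hXk : ∀ k, k ≠ i → lsub (transvection i j c) (X k) = X k := by
      intro k hk
      rw [lsub_X]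
      simp [transvection, Matrix.one_apply, hk.symm]
    have key : lsub (transvection i j c) (monomial (top n Q) 1) - monomial (top n Q) (1 : Fq)
        ∈ frobPow Fq n Q := by
      obtain ⟨u, hu⟩ := sub_dvd_pow_sub_pow (X i + C c * X j : MvPolynomial (Fin n) Fq) (X i) (Q - 1)
      have hi := Finset.mul_prod_erase Finset.univ
        (fun k => (X k : MvPolynomial (Fin n) Fq) ^ (Q - 1)) (Finset.mem_univ i)
      have hj := Finset.mul_prod_erase (Finset.univ.erase i)
        (fun k => (X k : MvPolynomial (Fin n) Fq) ^ (Q - 1))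
        (Finset.mem_erase.2 ⟨hij.symm, Finset.mem_univ j⟩)
      have hr : ∏ x ∈ Finset.univ.erase i, lsub (transvection i j c) (X x) ^ (Q - 1)
          = ∏ x ∈ Finset.univ.erase i, (X x : MvPolynomial (Fin n) Fq) ^ (Q - 1) :=
        Finset.prod_congr rfl fun k hk => by rw [hXk k (Finset.ne_of_mem_erase hk)]
      have hp : (X j : MvPolynomial (Fin n) Fq) ^ Q = X j ^ (Q - 1) * X j := by
        rw [← pow_succ, Nat.sub_add_cancel hQ]
      have : lsub (transvection i j c) (monomial (top n Q) 1) - monomial (top n Q) (1 : Fq)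
          = (C c * u * ∏ x ∈ (Finset.univ.erase i).erase j, (X x) ^ (Q - 1)) * X j ^ Q := by
        rw [monomial_top, map_prod]
        simp only [map_pow]
        rw [← Finset.mul_prod_erase Finset.univ
          (fun k => lsub (transvection i j c) (X k) ^ (Q - 1)) (Finset.mem_univ i), hr, ← hi, hXi,
          ← sub_mul, hu, ← hj, hp]
        ring
      rw [this]
      exact mul_mem_frobPow _ _ (X_pow_mem j)
    have := coeff_top_eq_zero hQ _ key
    rw [coeff_sub, h1, sub_eq_zero] at this
    exact this
  · intro A B _ _ hA hB f
    rw [lsub_mul, hB, hA]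

/-- The pairing on `S`. -/
noncomputable def pairS (Fq : Type) [Field Fq] (n Q : ℕ) :
    MvPolynomial (Fin n) Fq →ₗ[Fq] MvPolynomial (Fin n) Fq →ₗ[Fq] Fq :=
  (LinearMap.mul Fq (MvPolynomial (Fin n) Fq)).compr₂ (lcoeff Fq (top n Q))

lemma pairS_apply {Fq : Type} [Field Fq] {n Q : ℕ} (f g : MvPolynomial (Fin n) Fq) :
    pairS Fq n Q f g = coeff (top n Q) (f * g) := rfl

/-- The pairing descends to the quotient. -/
lemma exists_pair (Fq : Type) [Field Fq] (n Q : ℕ) (hQ : 0 < Q) :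
    ∃ B : (MvPolynomial (Fin n) Fq ⧸ frobPow Fq n Q) →ₗ[Fq]
        (MvPolynomial (Fin n) Fq ⧸ frobPow Fq n Q) →ₗ[Fq] Fq,
      ∀ f g, B ((frobPow Fq n Q).mkQ f) ((frobPow Fq n Q).mkQ g) = coeff (top n Q) (f * g) := by
  let B1 : (MvPolynomial (Fin n) Fq ⧸ frobPow Fq n Q) →ₗ[Fq] MvPolynomial (Fin n) Fq →ₗ[Fq] Fq :=
    (frobPow Fq n Q).liftQ (pairS Fq n Q) (by
      intro f hf
      rw [LinearMap.mem_ker]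
      refine LinearMap.ext fun g => ?_
      rw [pairS_apply, mul_comm]
      exact coeff_top_eq_zero hQ _ (mul_mem_frobPow _ _ hf))
  have hB1 : ∀ f g, B1 ((frobPow Fq n Q).mkQ f) g = coeff (top n Q) (f * g) := fun f g => rfl
  let B2 : (MvPolynomial (Fin n) Fq ⧸ frobPow Fq n Q) →ₗ[Fq]
      (MvPolynomial (Fin n) Fq ⧸ frobPow Fq n Q) →ₗ[Fq] Fq :=
    (frobPow Fq n Q).liftQ B1.flip (by
      intro f hf
      rw [LinearMap.mem_ker]
      refine LinearMap.ext fun x => ?_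
      obtain ⟨g, rfl⟩ := (frobPow Fq n Q).mkQ_surjective x
      rw [LinearMap.flip_apply, hB1]
      exact coeff_top_eq_zero hQ _ (mul_mem_frobPow _ _ hf))
  refine ⟨B2.flip, fun f g => ?_⟩
  rw [← hB1]
  rfl

lemma nondeg {Fq : Type} [Field Fq] {n Q i j : ℕ} (hij : i + j = n * (Q - 1))
    (f : MvPolynomial (Fin n) Fq) (hf : f.IsHomogeneous i)
    (h : ∀ g : MvPolynomial (Fin n) Fq, g.IsHomogeneous j → coeff (top n Q) (f * g) = 0) :
    f ∈ frobPow Fq n Q := by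
  rw [mem_frobPow]
  intro e he
  by_contra hk
  push Not at hk
  have hle : e ≤ top n Q := fun k => by rw [top_apply]; have := hk k; omega
  have hadd : e + (top n Q - e) = top n Q := add_tsub_cancel_of_le hle
  rw [mem_support_iff] at he
  have hei : e.degree = i := by
    by_contra hne
    exact he (hf.coeff_eq_zero hne)
  have hdeg : (top n Q - e).degree = j := by
    have := congrArg Finsupp.degree hadd
    rw [map_add, degree_top, hei] at this
    omega
  have := h (monomial (top n Q - e) 1) (isHomogeneous_monomial 1 hdeg)
  have h2 := coeff_mul_monomial e (top n Q - e) (1 : Fq) f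
  rw [hadd, this, mul_one] at h2
  exact he h2.symm

lemma main {Fq : Type} [Field Fq] {n Q i j : ℕ} (hQ : 0 < Q)
    (hsum : ∀ v : Fin n → MvPolynomial (Fin n) Fq, (∑ i, v i) ^ Q = ∑ i, v i ^ Q)
    (hfer : ∀ c : Fq, c ≠ 0 → c ^ (Q - 1) = 1) (hij : i + j = n * (Q - 1))
    (H : Set (GL (Fin n) Fq)) :
    Module.finrank Fq (Submodule.map (frobPow Fq n Q).mkQ (fixDeg Fq n Q H i))
      = Module.finrank Fq (↥(Qdeg Fq n Q j) ⧸
            Submodule.comap (Qdeg Fq n Q j).subtype (Ncof Fq n Q H j)) := by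
  obtain ⟨B, hB⟩ := exists_pair Fq n Q hQ
  have hfin : ∀ d, FiniteDimensional Fq (Qdeg Fq n Q d) := fun d =>
    Module.Finite.iff_fg.2 ((homogeneousSubmodule_fg (σ := Fin n) (R := Fq) d).map _)
  have := hfin i
  have := hfin j
  have hcomm : ∀ x y, B x y = B y x := by
    intro x y
    obtain ⟨f, rfl⟩ := (frobPow Fq n Q).mkQ_surjective x
    obtain ⟨g, rfl⟩ := (frobPow Fq n Q).mkQ_surjective y
    rw [hB, hB, mul_comm]
  let Φ : ∀ a b, Qdeg Fq n Q a →ₗ[Fq] Module.Dual Fq (Qdeg Fq n Q b) := fun a b =>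
    B.domRestrict₁₂ (Qdeg Fq n Q a) (Qdeg Fq n Q b)
  have hΦ : ∀ a b x y, Φ a b x y = B x.1 y.1 := fun a b x y => rfl
  have hinj : ∀ a b, a + b = n * (Q - 1) → Function.Injective (Φ a b) := by
    intro a b hab
    rw [← LinearMap.ker_eq_bot, LinearMap.ker_eq_bot']
    rintro ⟨x, hx⟩ h0
    obtain ⟨f, hf, rfl⟩ := hx
    apply Subtype.ext
    change (frobPow Fq n Q).mkQ f = 0
    rw [Submodule.mkQ_apply, Submodule.Quotient.mk_eq_zero]
    refine nondeg hab f hf fun g hg => ?_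
    rw [← hB]
    exact LinearMap.congr_fun h0 ⟨_, Submodule.mem_map_of_mem hg⟩
  have hle1 := LinearMap.finrank_le_finrank_of_injective (hinj i j hij)
  have hle2 := LinearMap.finrank_le_finrank_of_injective (hinj j i (by omega))
  rw [Subspace.dual_finrank_eq] at hle1 hle2
  have hsurj : Function.Surjective (Φ i j) :=
    (LinearMap.injective_iff_surjective_of_finrank_eq_finrank
      (by rw [Subspace.dual_finrank_eq]; omega)).1 (hinj i j hij)
  rw [(Subspace.quotEquivAnnihilator _).finrank_eq]
  have hVU : Submodule.map (frobPow Fq n Q).mkQ (fixDeg Fq n Q H i) ≤ Qdeg Fq n Q i :=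
    Submodule.map_mono inf_le_left
  rw [← (Submodule.submoduleOfEquivOfLe hVU).finrank_eq,
    (Submodule.equivMapOfInjective (Φ i j) (hinj i j hij) _).finrank_eq]
  have hinv : ∀ g : GL (Fin n) Fq, ∀ f : MvPolynomial (Fin n) Fq,
      coeff (top n Q) (lsub (g : Matrix (Fin n) (Fin n) Fq) f) = coeff (top n Q) f := fun g =>
    invariant hQ hsum hfer _ ((Matrix.isUnit_iff_isUnit_det _).1 g.isUnit).ne_zero
  have hset : Submodule.map (Φ i j)
        ((Submodule.map (frobPow Fq n Q).mkQ (fixDeg Fq n Q H i)).submoduleOf (Qdeg Fq n Q i))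
      = (Submodule.comap (Qdeg Fq n Q j).subtype (Ncof Fq n Q H j)).dualAnnihilator := by
    apply le_antisymm
    · rintro _ ⟨⟨x, hx⟩, hxV, rfl⟩
      obtain ⟨f, hf, rfl⟩ := (hxV : x ∈ Submodule.map (frobPow Fq n Q).mkQ (fixDeg Fq n Q H i))
      rw [Submodule.mem_dualAnnihilator]
      rintro ⟨y, hy⟩ hyN
      rw [hΦ]
      have hle : Ncof Fq n Q H j ≤ LinearMap.ker (B ((frobPow Fq n Q).mkQ f)) := by
        rw [Ncof, Submodule.span_le]
        rintro _ ⟨g, hg, b, hb, rfl⟩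
        rw [SetLike.mem_coe, LinearMap.mem_ker, hB, mul_sub, coeff_sub]
        have hfg := hf.2
        simp only [Submodule.mem_iInf, SetLike.mem_coe] at hfg
        have h2 : lsub (g : Matrix (Fin n) (Fin n) Fq) f - f ∈ frobPow Fq n Q := hfg g hg
        have h3 := coeff_top_eq_zero hQ _
          (mul_mem_frobPow (lsub (g : Matrix (Fin n) (Fin n) Fq) b) _ h2)
        have h4 := hinv g (f * b)
        rw [map_mul] at h4
        rw [mul_sub, coeff_sub, sub_eq_zero, mul_comm _ f, mul_comm _ (lsub _ f)] at h3
        rw [← h3, h4, sub_self]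
      exact hle hyN
    · intro φ hφ
      obtain ⟨⟨x, hx⟩, rfl⟩ := hsurj φ
      refine ⟨⟨x, hx⟩, ?_, rfl⟩
      obtain ⟨f, hf, rfl⟩ := hx
      change (frobPow Fq n Q).mkQ f ∈ Submodule.map (frobPow Fq n Q).mkQ (fixDeg Fq n Q H i)
      refine Submodule.mem_map_of_mem ⟨hf, ?_⟩
      simp only [Submodule.mem_iInf, SetLike.mem_coe]
      intro g hg
      change lsub (g : Matrix (Fin n) (Fin n) Fq) f - f ∈ frobPow Fq n Q
      have hfh : f.IsHomogeneous i := hf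
      refine nondeg hij _ ((lsub_hom _ _ hfh).sub hfh) fun b hb => ?_
      obtain ⟨b', hb', rfl⟩ : ∃ b' : MvPolynomial (Fin n) Fq, b'.IsHomogeneous j ∧
          lsub (g : Matrix (Fin n) (Fin n) Fq) b' = b := by
        refine ⟨lsub ((g⁻¹ : GL (Fin n) Fq) : Matrix (Fin n) (Fin n) Fq) b, lsub_hom _ _ hb, ?_⟩
        rw [← lsub_mul, ← Units.val_mul, inv_mul_cancel, Units.val_one, lsub_one]
      rw [Submodule.mem_dualAnnihilator] at hφ
      have hmem : (frobPow Fq n Q).mkQ (lsub (g : Matrix (Fin n) (Fin n) Fq) b' - b')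
          ∈ Ncof Fq n Q H j := Submodule.subset_span ⟨g, hg, b', hb', rfl⟩
      have h0 := hφ ⟨_, Submodule.mem_map_of_mem (hb.sub hb')⟩ hmem
      rw [hΦ] at h0
      change B ((frobPow Fq n Q).mkQ f)
        ((frobPow Fq n Q).mkQ (lsub (g : Matrix (Fin n) (Fin n) Fq) b' - b')) = 0 at h0
      rw [hB, mul_sub, coeff_sub, sub_eq_zero] at h0
      rw [sub_mul, coeff_sub, ← map_mul, hinv, h0, sub_self]
  rw [hset]

end CDD

/-- Corollary (complementary degree duality): with `d₀ = n(q^m − 1)`, for every composition `α`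
of `n` and every `0 ≤ i ≤ d₀`, the dimension of the `P_α`-fixed subspace of `Q_i` equals the
dimension of the `P_α`-cofixed quotient of `Q_{d₀−i}`, where `Q = S/𝔪^{[q^m]}`. -/
theorem statement4 (q m n ℓ : ℕ) (Fq : Type) [Field Fq] [Fintype Fq]
    (hcard : Fintype.card Fq = q) (α : ℕ → ℕ)
    (hpos : ∀ i < ℓ, 0 < α i) (hsum : ∑ i ∈ Finset.range ℓ, α i = n)
    (i : ℕ) (hi : i ≤ n * (q ^ m - 1)) :
    Module.finrank Fq
        (Submodule.map (frobPow Fq n (q ^ m)).mkQ (fixDeg Fq n (q ^ m) (Pa Fq n ℓ α) i))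
      = Module.finrank Fq
          (↥(Qdeg Fq n (q ^ m) (n * (q ^ m - 1) - i)) ⧸
            Submodule.comap (Qdeg Fq n (q ^ m) (n * (q ^ m - 1) - i)).subtype
              (Ncof Fq n (q ^ m) (Pa Fq n ℓ α) (n * (q ^ m - 1) - i))) := by
  have hQ : 0 < q ^ m := by
    rw [← hcard]
    exact pow_pos Fintype.card_pos m
  refine CDD.main hQ ?_ ?_ (by omega) _
  · intro v
    obtain ⟨p, hp, k, hpp, hk⟩ := FiniteField.card' Fq
    have : Fact p.Prime := ⟨hpp⟩
    rw [← hcard, hk, ← pow_mul]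
    exact sum_pow_char_pow p _ _ _
  · intro c hc
    have h1 : c ^ (q ^ m) = c := by
      rw [← hcard]
      exact FiniteField.pow_card_pow m c
    have h2 : c ^ (q ^ m) = c ^ (q ^ m - 1) * c := by
      rw [← pow_succ, Nat.sub_add_cancel hQ]
    rw [h2] at h1
    exact mul_right_cancel₀ hc (h1.trans (one_mul c).symm)
end

section
/- Let q be a prime power, S = F_q[x,y], X := x^{q−1}, Y := y^{q−1}, D_{2,1} := Σ_{i=0}^{q} X^i Y^{q−i}, D_{2,0} := Σ_{i=1}^{q} X^i Y^{q+1−i}, and let N_G be the F_q-span of {g(f) − f : g ∈ GL_2(F_q), f ∈ S}. Then for every element M of the set {1, XY, X²Y, …, X^{q−2}Y}: (a) D_{2,0}·M ∈ N_G; and (b) for every j ≥ 0, D_{2,1}^j·M ∉ N_G. In other words, in the cofixed space S_G := S/N_G the images of these monomials are annihilated by D_{2,0} but not by any power of D_{2,1}. -/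
open Finset Matrix MvPolynomial

/-- The span `N_G` of `{g(f) − f : g ∈ GL_2(F_q), f ∈ F_q[x,y]}`. -/
noncomputable def NG (Fq : Type) [Field Fq] : Submodule Fq (MvPolynomial (Fin 2) Fq) :=
  Submodule.span Fq
    {h | ∃ g : GL (Fin 2) Fq, ∃ f : MvPolynomial (Fin 2) Fq,
      h = lsub (g : Matrix (Fin 2) (Fin 2) Fq) f - f}

/-- The Dickson invariant `D_{2,1} = Σ_{i=0}^{q} X^i Y^{q−i}` (where `X = x^{q−1}`,
`Y = y^{q−1}`). -/
noncomputable def D21 (q : ℕ) (Fq : Type) [Field Fq] : MvPolynomial (Fin 2) Fq :=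
  ∑ i ∈ Finset.range (q + 1),
    MvPolynomial.X 0 ^ (i * (q - 1)) * MvPolynomial.X 1 ^ ((q - i) * (q - 1))

/-- The Dickson invariant `D_{2,0} = Σ_{i=1}^{q} X^i Y^{q+1−i}` (where `X = x^{q−1}`,
`Y = y^{q−1}`). -/
noncomputable def D20 (q : ℕ) (Fq : Type) [Field Fq] : MvPolynomial (Fin 2) Fq :=
  ∑ i ∈ Finset.Icc 1 q,
    MvPolynomial.X 0 ^ (i * (q - 1)) * MvPolynomial.X 1 ^ ((q + 1 - i) * (q - 1))

section aux

variable {Fq : Type} [Field Fq]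

lemma aux_mem (g : Matrix (Fin 2) (Fin 2) Fq) (h : IsUnit g.det)
    (f : MvPolynomial (Fin 2) Fq) : lsub g f - f ∈ NG Fq := by
  apply Submodule.subset_span
  exact ⟨Matrix.GeneralLinearGroup.mk'' g h, f, rfl⟩

lemma aux_lsub_X0 (g : Matrix (Fin 2) (Fin 2) Fq) :
    lsub g (X 0) = C (g 0 0) * X 0 + C (g 0 1) * X 1 := by
  simp [lsub, Fin.sum_univ_two]

lemma aux_lsub_X1 (g : Matrix (Fin 2) (Fin 2) Fq) :
    lsub g (X 1) = C (g 1 0) * X 0 + C (g 1 1) * X 1 := by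
  simp [lsub, Fin.sum_univ_two]

/-- swapping the variables -/
lemma aux_swap (a b : ℕ) :
    (X 0 ^ a * X 1 ^ b - X 0 ^ b * X 1 ^ a : MvPolynomial (Fin 2) Fq) ∈ NG Fq := by
  have h := aux_mem (!![0, 1; 1, 0] : Matrix (Fin 2) (Fin 2) Fq)
    (by simp [Matrix.det_fin_two]) (X 0 ^ b * X 1 ^ a)
  simp only [map_mul, map_pow, aux_lsub_X0, aux_lsub_X1] at h
  simp at h
  rwa [mul_comm (X 1 ^ b)] at h

/-- the torus kills everything of nonzero weight -/
lemma aux_torus [Fintype Fq] (e : ℕ) (he : ¬ (Fintype.card Fq - 1 ∣ e))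
    (f : MvPolynomial (Fin 2) Fq)
    (hf : ∀ u : Fq, u ≠ 0 → lsub (!![u, 0; 0, 1] : Matrix (Fin 2) (Fin 2) Fq) f = C (u ^ e) * f) :
    f ∈ NG Fq := by
  rw [← FiniteField.forall_pow_eq_one_iff Fq e] at he
  push Not at he
  obtain ⟨u, hu⟩ := he
  have h := aux_mem (!![(u : Fq), 0; 0, 1] : Matrix (Fin 2) (Fin 2) Fq)
    (by simp [Matrix.det_fin_two]) f
  rw [hf _ u.ne_zero] at h
  have hu' : (u : Fq) ^ e - 1 ≠ 0 := by
    intro h0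
    apply hu
    ext
    push_cast
    linear_combination h0
  have h2 : C ((u : Fq) ^ e) * f - f = ((u : Fq) ^ e - 1) • f := by
    rw [MvPolynomial.smul_eq_C_mul]; simp; ring
  rw [h2] at h
  exact (Submodule.smul_mem_iff _ hu').1 h

lemma aux_pow [Fintype Fq] :
    ((X 0 - X 1) ^ (Fintype.card Fq - 1) : MvPolynomial (Fin 2) Fq) =
      ∑ i ∈ Finset.range (Fintype.card Fq), X 0 ^ i * X 1 ^ (Fintype.card Fq - 1 - i) := by
  have hne : (X 0 - X 1 : MvPolynomial (Fin 2) Fq) ≠ 0 := by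
    rw [sub_ne_zero]
    intro h
    simpa using MvPolynomial.X_injective h
  apply mul_right_cancel₀ hne
  rw [(Commute.all _ _).geom_sum₂_mul, ← pow_succ, Nat.sub_add_cancel Fintype.card_pos]
  obtain ⟨p, hp⟩ := CharP.exists Fq
  obtain ⟨n, hpp, hn⟩ := FiniteField.card Fq p
  have := Fact.mk hpp
  rw [hn, sub_pow_char_pow]

lemma aux_A [Fintype Fq] (q : ℕ) (hcard : Fintype.card Fq = q) (s r : ℕ) (hs : 1 ≤ s)
    (hs' : s ≤ q - 1) (hr : 1 ≤ r) :
    (X 0 ^ (q - 1) * (X 0 ^ (q - 1) - X 1 ^ (q - 1)) ^ s * (X 1 ^ (q - 1)) ^ r :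
      MvPolynomial (Fin 2) Fq) ∈ NG Fq := by
  have hpow := aux_pow (Fq := Fq)
  rw [hcard] at hpow
  obtain ⟨t, ht⟩ : ∃ t, t + s = (q - 1) * r := by
    refine ⟨(q - 1) * r - s, Nat.sub_add_cancel ?_⟩
    nlinarith
  have hq : q = (q - 1) + 1 := by omega
  set l : MvPolynomial (Fin 2) Fq := X 0 * (X 0 ^ (q - 1) - X 1 ^ (q - 1)) with hl
  have hl1 : lsub (!![1, -1; 0, 1] : Matrix (Fin 2) (Fin 2) Fq) l = l := by
    have h1 : l = X 0 ^ q - X 0 * X 1 ^ (q - 1) := by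
      rw [hl]; nth_rewrite 3 [hq]; ring
    have h2 : ((X 0 - X 1) ^ q : MvPolynomial (Fin 2) Fq) = X 0 ^ q - X 1 ^ q := by
      obtain ⟨p, hp⟩ := CharP.exists Fq
      obtain ⟨n, hpp, hn⟩ := FiniteField.card Fq p
      have := Fact.mk hpp
      rw [← hcard, hn, sub_pow_char_pow]
    have h3 : (X 1 ^ q : MvPolynomial (Fin 2) Fq) = X 1 * X 1 ^ (q - 1) := by
      nth_rewrite 1 [hq]; ring
    rw [h1]
    simp only [map_sub, map_mul, map_pow, aux_lsub_X0, aux_lsub_X1]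
    simp
    rw [← sub_eq_add_neg, h2, h3]
    ring
  have hl2 : ∀ u : Fq, u ≠ 0 →
      lsub (!![u, 0; 0, 1] : Matrix (Fin 2) (Fin 2) Fq) l = C u * l := by
    intro u hu
    have : u ^ (q - 1) = 1 := by rw [← hcard]; exact FiniteField.pow_card_sub_one_eq_one u hu
    rw [hl]
    simp only [map_sub, map_mul, map_pow, aux_lsub_X0, aux_lsub_X1]
    simp [mul_pow, ← C_pow, this, mul_assoc]
  have hmem := aux_mem (!![1, -1; 0, 1] : Matrix (Fin 2) (Fin 2) Fq)
    (by simp [Matrix.det_fin_two]) (X 0 ^ (q - 1) * l ^ s * X 1 ^ t)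
  simp only [map_mul, map_pow, hl1, aux_lsub_X0, aux_lsub_X1] at hmem
  have hsum : (∑ i ∈ Finset.range (q - 1), X 0 ^ i * X 1 ^ (q - 1 - i) * l ^ s * X 1 ^ t :
      MvPolynomial (Fin 2) Fq) ∈ NG Fq := by
    have h4 : ((X 0 - X 1) ^ (q - 1) : MvPolynomial (Fin 2) Fq) =
        (∑ i ∈ Finset.range (q - 1), X 0 ^ i * X 1 ^ (q - 1 - i)) + X 0 ^ (q - 1) := by
      rw [hpow]
      nth_rewrite 1 [hq]
      rw [Finset.sum_range_succ]
      simp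
    simp at hmem
    rw [← sub_eq_add_neg, h4] at hmem
    rw [← Finset.sum_mul, ← Finset.sum_mul]
    convert hmem using 1
    ring
  have hi0 : q - 1 - s ∈ Finset.range (q - 1) := by simp; omega
  rw [← Finset.add_sum_erase _ _ hi0] at hsum
  have hrest : (∑ i ∈ (Finset.range (q - 1)).erase (q - 1 - s),
      X 0 ^ i * X 1 ^ (q - 1 - i) * l ^ s * X 1 ^ t : MvPolynomial (Fin 2) Fq) ∈ NG Fq := by
    apply Submodule.sum_mem
    intro i hi
    simp only [Finset.mem_erase, Finset.mem_range] at hi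
    apply aux_torus (i + s)
    · rw [hcard]
      rintro ⟨k, hk⟩
      have hk1 : k < 2 := by
        by_contra hcon
        have : (q - 1) * 2 ≤ (q - 1) * k := Nat.mul_le_mul_left _ (by omega)
        omega
      interval_cases k
      · omega
      · omega
    · intro u hu
      simp only [map_mul, map_pow, hl2 u hu, aux_lsub_X0, aux_lsub_X1]
      simp
      ring
  have hfin := (Submodule.add_mem_iff_left _ hrest).1 hsum
  convert hfin using 1
  have e1 : q - 1 - (q - 1 - s) = s := by omega
  rw [e1, ← pow_mul, ← ht, hl, mul_pow]
  have e2 : (X 0 ^ (q - 1) : MvPolynomial (Fin 2) Fq) = X 0 ^ (q - 1 - s) * X 0 ^ s := by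
    rw [← pow_add]; congr 1; omega
  rw [pow_add, ← sub_eq_zero]
  nth_rewrite 1 [e2]
  ring

lemma aux_B [Fintype Fq] (q : ℕ) (hcard : Fintype.card Fq = q) (k r : ℕ)
    (hk : k + 2 ≤ q) (hr : 1 ≤ r) :
    ((X 0 ^ (q - 1)) ^ (k + 2) * (X 1 ^ (q - 1)) ^ r -
      (X 0 ^ (q - 1)) ^ (k + 1) * (X 1 ^ (q - 1)) ^ (r + 1) :
      MvPolynomial (Fin 2) Fq) ∈ NG Fq := by
  have hA := aux_A (Fq := Fq) q hcard
  set x : MvPolynomial (Fin 2) Fq := X 0 ^ (q - 1)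
  set y : MvPolynomial (Fin 2) Fq := X 1 ^ (q - 1)
  have h1 : x ^ (k + 2) * y ^ r - x ^ (k + 1) * y ^ (r + 1) =
      ∑ m ∈ Finset.range (k + 1), (k.choose m) • (x * (x - y) ^ (m + 1) * y ^ (r + (k - m))) := by
    have : x ^ k = ((x - y) + y) ^ k := by ring
    have h2 : x ^ (k + 2) * y ^ r - x ^ (k + 1) * y ^ (r + 1) = x * (x - y) * y ^ r * x ^ k := by
      ring
    rw [h2, this, add_pow, Finset.mul_sum]
    apply Finset.sum_congr rfl
    intro m hm
    rw [nsmul_eq_mul, pow_add y r]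
    ring
  rw [h1]
  apply Submodule.sum_mem
  intro m hm
  rw [Finset.mem_range] at hm
  exact nsmul_mem (hA _ _ (by omega) (by omega) (by omega)) _

lemma aux_C [Fintype Fq] (q : ℕ) (hcard : Fintype.card Fq = q) (m : ℕ) : ∀ r : ℕ,
    m + 1 ≤ q → 1 ≤ r →
    ((X 0 ^ (q - 1)) ^ (m + 1) * (X 1 ^ (q - 1)) ^ r -
      (X 0 ^ (q - 1)) * (X 1 ^ (q - 1)) ^ (r + m) :
      MvPolynomial (Fin 2) Fq) ∈ NG Fq := by
  induction m with
  | zero => intro r _ _; simp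
  | succ m ih =>
    intro r hm hr
    have h1 := aux_B (Fq := Fq) q hcard m r (by omega) hr
    have h2 := ih (r + 1) (by omega) (by omega)
    have h3 := Submodule.add_mem _ h1 h2
    convert h3 using 1
    rw [show r + (m + 1) = r + 1 + m by omega]
    ring

lemma aux_D [Fintype Fq] (q : ℕ) (hcard : Fintype.card Fq = q) (a b : ℕ)
    (ha : 1 ≤ a) (hb : 1 ≤ b) (hab : a + b ≤ 2 * q) :
    (X 0 ^ (a * (q - 1)) * X 1 ^ (b * (q - 1)) -
      X 0 ^ (q - 1) * X 1 ^ ((a + b - 1) * (q - 1)) :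
      MvPolynomial (Fin 2) Fq) ∈ NG Fq := by
  have key : ∀ a b : ℕ, 1 ≤ a → 1 ≤ b → a ≤ q →
      (X 0 ^ (a * (q - 1)) * X 1 ^ (b * (q - 1)) -
      X 0 ^ (q - 1) * X 1 ^ ((a + b - 1) * (q - 1)) :
      MvPolynomial (Fin 2) Fq) ∈ NG Fq := by
    intro a b ha hb haq
    have h := aux_C (Fq := Fq) q hcard (a - 1) b (by omega) hb
    rw [show a - 1 + 1 = a by omega, show b + (a - 1) = a + b - 1 by omega] at h
    simp only [← pow_mul, mul_comm (q - 1)] at h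
    exact h
  by_cases haq : a ≤ q
  · exact key a b ha hb haq
  · have h1 := aux_swap (Fq := Fq) (a * (q - 1)) (b * (q - 1))
    have h2 := key b a hb ha (by omega)
    rw [add_comm b a] at h2
    have h3 := Submodule.add_mem _ h1 h2
    simpa using h3

lemma aux_a [Fintype Fq] (q : ℕ) (hcard : Fintype.card Fq = q) (c d : ℕ) (hc : c + d + 1 ≤ q) :
    D20 q Fq * (X 0 ^ (c * (q - 1)) * X 1 ^ (d * (q - 1))) ∈ NG Fq := by
  have h0 : ((q : ℕ) : MvPolynomial (Fin 2) Fq) = 0 := by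
    have := FiniteField.cast_card_eq_zero Fq
    rw [hcard] at this
    rw [← map_natCast (C : Fq →+* MvPolynomial (Fin 2) Fq), this, map_zero]
  have h1 : D20 q Fq * (X 0 ^ (c * (q - 1)) * X 1 ^ (d * (q - 1))) =
      ∑ k ∈ Finset.Icc 1 q, (X 0 ^ ((k + c) * (q - 1)) * X 1 ^ ((q + 1 - k + d) * (q - 1)) -
        X 0 ^ (q - 1) * X 1 ^ ((q + c + d) * (q - 1))) := by
    rw [Finset.sum_sub_distrib, Finset.sum_const, Nat.card_Icc, nsmul_eq_mul]
    simp only [Nat.add_sub_cancel, h0, zero_mul, sub_zero]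
    rw [D20, Finset.sum_mul]
    apply Finset.sum_congr rfl
    intro k hk
    rw [add_mul, add_mul, pow_add, pow_add]
    ring
  rw [h1]
  apply Submodule.sum_mem
  intro k hk
  rw [Finset.mem_Icc] at hk
  have := aux_D (Fq := Fq) q hcard (k + c) (q + 1 - k + d) (by omega) (by omega) (by omega)
  rwa [show k + c + (q + 1 - k + d) - 1 = q + c + d by omega] at this

/-- The invariant functional: sum of the values at nonzero points. -/
lemma aux_phi [Fintype Fq] (f : MvPolynomial (Fin 2) Fq) (hf : f ∈ NG Fq) :
    ∑ v : Fin 2 → Fq, eval v f - eval 0 f = 0 := by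
  induction hf using Submodule.span_induction with
  | mem f h =>
    obtain ⟨g, f, rfl⟩ := h
    have hev : ∀ v : Fin 2 → Fq, eval v (lsub (g : Matrix (Fin 2) (Fin 2) Fq) f) =
        eval ((g : Matrix (Fin 2) (Fin 2) Fq) *ᵥ v) f := by
      intro v
      rw [lsub, ← MvPolynomial.coe_aeval_eq_eval, ← MvPolynomial.coe_aeval_eq_eval]
      change (((aeval v).comp (aeval _) : MvPolynomial (Fin 2) Fq →ₐ[Fq] Fq)) f = (aeval _) f
      congr 1
      ext i
      fin_cases i <;> simp [Matrix.mulVec, dotProduct]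
    have hbij : Function.Bijective (fun v : Fin 2 → Fq =>
        (g : Matrix (Fin 2) (Fin 2) Fq) *ᵥ v) := by
      apply Finite.injective_iff_bijective.1
      exact Matrix.mulVec_injective_of_isUnit g.isUnit
    have hsum : ∑ v : Fin 2 → Fq, eval ((g : Matrix (Fin 2) (Fin 2) Fq) *ᵥ v) f =
        ∑ v : Fin 2 → Fq, eval v f :=
      Fintype.sum_bijective _ hbij _ _ (fun _ => rfl)
    simp only [map_sub, hev, Finset.sum_sub_distrib, hsum, Matrix.mulVec_zero]
    ring
  | zero => simp
  | add f g _ _ h1 h2 =>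
    simp only [map_add, Finset.sum_add_distrib]
    linear_combination h1 + h2
  | smul c f _ h =>
    simp only [MvPolynomial.smul_eval, ← Finset.mul_sum]
    linear_combination c * h

lemma aux_D21 [Fintype Fq] (q : ℕ) (hcard : Fintype.card Fq = q) (v : Fin 2 → Fq) (hv : v ≠ 0) :
    eval v (D21 q Fq) = 1 := by
  have hq : 1 < q := hcard ▸ Fintype.one_lt_card
  have hp : ∀ a : Fq, a ≠ 0 → ∀ k, a ^ (k * (q - 1)) = 1 := by
    intro a ha k
    rw [mul_comm, pow_mul, ← hcard, FiniteField.pow_card_sub_one_eq_one a ha, one_pow]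
  have hz : ∀ k, k ≠ 0 → (0 : Fq) ^ (k * (q - 1)) = 0 := by
    intro k hk
    apply zero_pow
    exact Nat.mul_ne_zero hk (by omega)
  have h0 : ((q : ℕ) : Fq) = 0 := by
    have := FiniteField.cast_card_eq_zero Fq
    rwa [hcard] at this
  simp only [D21, map_sum, map_mul, map_pow, eval_X]
  by_cases h0' : v 0 = 0
  · have h1' : v 1 ≠ 0 := by
      intro h; apply hv; ext i; fin_cases i <;> simp [h, h0']
    rw [Finset.sum_eq_single 0]
    · rw [hp _ h1']; simp
    · intro i _ hi
      rw [h0', hz i hi, zero_mul]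
    · simp
  · by_cases h1' : v 1 = 0
    · rw [Finset.sum_eq_single q]
      · rw [hp _ h0']; simp
      · intro i hi hi'
        rw [Finset.mem_range] at hi
        rw [h1', hz _ (by omega), mul_zero]
      · simp
    · simp [hp _ h0', hp _ h1', h0]

lemma aux_b [Fintype Fq] (q : ℕ) (hcard : Fintype.card Fq = q) (M : MvPolynomial (Fin 2) Fq)
    (hM : ∑ v : Fin 2 → Fq, eval v M - eval 0 M ≠ 0) (j : ℕ) :
    D21 q Fq ^ j * M ∉ NG Fq := by
  classical
  intro h
  apply hM
  have h1 := aux_phi _ h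
  rw [← Finset.add_sum_erase _ _ (Finset.mem_univ (0 : Fin 2 → Fq)), add_sub_cancel_left] at h1 ⊢
  rw [← h1]
  apply Finset.sum_congr rfl
  intro v hv
  rw [Finset.mem_erase] at hv
  simp [aux_D21 q hcard v hv.1]

end aux

/-- Corollary: in the `GL_2(F_q)`-cofixed space `S_G = F_q[x,y]/N_G`, the images of the
monomials `{1, XY, X²Y, …, X^{q−2}Y}` (with `X = x^{q−1}`, `Y = y^{q−1}`) are all annihilated
by `D_{2,0}`, but none of them is annihilated by any power of `D_{2,1}`. -/
theorem statement15 (q : ℕ) (hq : IsPrimePow q) (Fq : Type) [Field Fq] [Fintype Fq]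
    (hcard : Fintype.card Fq = q) :
    ∀ M ∈ (insert (1 : MvPolynomial (Fin 2) Fq)
        {p : MvPolynomial (Fin 2) Fq | ∃ i : ℕ, 1 ≤ i ∧ i ≤ q - 2 ∧
          p = MvPolynomial.X 0 ^ (i * (q - 1)) * MvPolynomial.X 1 ^ (q - 1)}),
      D20 q Fq * M ∈ NG Fq ∧ ∀ j : ℕ, D21 q Fq ^ j * M ∉ NG Fq := by
  classical
  have hq1 : 1 < q := hcard ▸ Fintype.one_lt_card
  have h0 : ((q : ℕ) : Fq) = 0 := by
    have := FiniteField.cast_card_eq_zero Fq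
    rwa [hcard] at this
  intro M hM
  rcases hM with rfl | ⟨i, hi1, hi2, rfl⟩
  · refine ⟨?_, aux_b q hcard _ ?_⟩
    · have := aux_a (Fq := Fq) q hcard 0 0 (by omega)
      simpa using this
    · simp [hcard, h0]
  · refine ⟨?_, aux_b q hcard _ ?_⟩
    · have := aux_a (Fq := Fq) q hcard i 1 (by omega)
      simpa using this
    · have hs : ∀ k, 1 ≤ k → ∑ a : Fq, a ^ (k * (q - 1)) = -1 := by
        intro k hk
        rw [← Finset.add_sum_erase _ _ (Finset.mem_univ (0 : Fq)),
          zero_pow (Nat.mul_ne_zero (by omega) (by omega)), zero_add]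
        rw [Finset.sum_congr rfl (g := fun _ => (1 : Fq))]
        · rw [Finset.sum_const, Finset.card_erase_of_mem (Finset.mem_univ _), Finset.card_univ,
            hcard, nsmul_eq_mul, Nat.cast_sub hq1.le, h0]
          simp
        · intro a ha
          rw [Finset.mem_erase] at ha
          rw [mul_comm, pow_mul, ← hcard, FiniteField.pow_card_sub_one_eq_one a ha.1, one_pow]
      have hs1 := hs 1 le_rfl
      rw [one_mul] at hs1
      have hne : q - 1 ≠ 0 := by omega
      have hsum : ∑ v : Fin 2 → Fq, v 0 ^ (i * (q - 1)) * v 1 ^ (q - 1) = 1 := by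
        rw [Fintype.sum_equiv (finTwoArrowEquiv Fq)
          (fun v => v 0 ^ (i * (q - 1)) * v 1 ^ (q - 1))
          (fun p : Fq × Fq => p.1 ^ (i * (q - 1)) * p.2 ^ (q - 1)) (fun _ => rfl),
          Fintype.sum_prod_type]
        simp only
        rw [← Finset.sum_mul_sum, hs i hi1, hs1]
        ring
      simp [hsum, hne]
end

section
/- Let q be a prime power, S = F_q[x,y], and B ⊆ GL_2(F_q) the Borel subgroup of upper-triangular matrices. Then the graded B-cofixed space S_B has Hilbert series Hilb(S_B, t) = t^{q−1}/((1−t^{q−1})(1−t^{q²−q})) + (1 + Σ_{j=2}^{q−1} t^{j(q−1)})/(1−t^{q²−q}) as an identity in ℤ[[t]] (the sum Σ_{j=2}^{q−1} being empty when q = 2). -/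
open Finset Matrix MvPolynomial PowerSeries

/-- The Borel subgroup of invertible upper-triangular matrices in `GL_2(F_q)`. -/
def Bset (Fq : Type) [Field Fq] : Set (GL (Fin 2) Fq) :=
  {g | (g : Matrix (Fin 2) (Fin 2) Fq) 1 0 = 0}

/-- The span `N_B` of `{g(f) − f : g ∈ B, f ∈ F_q[x,y]}`. -/
noncomputable def NB (Fq : Type) [Field Fq] : Submodule Fq (MvPolynomial (Fin 2) Fq) :=
  Submodule.span Fq
    {h | ∃ g ∈ Bset Fq, ∃ f : MvPolynomial (Fin 2) Fq,
      h = lsub ((g : GL (Fin 2) Fq) : Matrix (Fin 2) (Fin 2) Fq) f - f}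

/-- The Hilbert series of the graded quotient of `F_q[x,y]` by a (graded) subspace `N`:
the degree-`d` coefficient is the dimension of `S_d/(S_d ∩ N)`. -/
noncomputable def hilbQuot (Fq : Type) [Field Fq]
    (N : Submodule Fq (MvPolynomial (Fin 2) Fq)) : PowerSeries ℚ :=
  PowerSeries.mk fun d =>
    (Module.finrank Fq
      (↥(MvPolynomial.homogeneousSubmodule (Fin 2) Fq d) ⧸
        Submodule.comap (MvPolynomial.homogeneousSubmodule (Fin 2) Fq d).subtype N) : ℚ)


namespace Borel17

variable {Fq : Type} [Field Fq]

/-- The invariant-up-to-scalar form `x^q - x y^(q-1)`. -/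
noncomputable def zz (Fq : Type) [Field Fq] (q : ℕ) : MvPolynomial (Fin 2) Fq :=
  MvPolynomial.X 0 ^ q - MvPolynomial.X 0 * MvPolynomial.X 1 ^ (q - 1)

/-- `x^k z^l y^j`. -/
noncomputable def W (Fq : Type) [Field Fq] (q k l j : ℕ) : MvPolynomial (Fin 2) Fq :=
  MvPolynomial.X 0 ^ k * zz Fq q ^ l * MvPolynomial.X 1 ^ j

/-- The reindexed family. -/
noncomputable def w (Fq : Type) [Field Fq] (q : ℕ) (s : ℕ × ℕ) : MvPolynomial (Fin 2) Fq :=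
  W Fq q (s.1 % q) (s.1 / q) s.2

theorem W_succ (q k l j : ℕ) :
    W Fq q k (l + 1) j = W Fq q (k + q) l j - W Fq q (k + 1) l (j + (q - 1)) := by
  unfold W zz; ring

/-- The exponent `(i, j)`. -/
noncomputable def ex (i j : ℕ) : Fin 2 →₀ ℕ := Finsupp.single 0 i + Finsupp.single 1 j

theorem ex_zero (i j : ℕ) : ex i j 0 = i := by simp [ex]
theorem ex_one (i j : ℕ) : ex i j 1 = j := by simp [ex]

theorem W_zero (q k j : ℕ) : W Fq q k 0 j = MvPolynomial.monomial (ex k j) 1 := by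
  unfold W ex
  rw [pow_zero, mul_one, MvPolynomial.X_pow_eq_monomial, MvPolynomial.X_pow_eq_monomial,
    MvPolynomial.monomial_mul, one_mul]

theorem coeff_W (q : ℕ) (hq : 2 ≤ q) (l : ℕ) : ∀ (k j : ℕ) (s : Fin 2 →₀ ℕ), k + q * l ≤ s 0 →
    MvPolynomial.coeff s (W Fq q k l j) = if ex (k + q * l) j = s then 1 else 0 := by
  induction l with
  | zero => intro k j s _; rw [W_zero, MvPolynomial.coeff_monomial]; simp
  | succ l ih =>
    intro k j s hs
    have e : k + q * (l + 1) = k + q + q * l := by ring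
    rw [W_succ, MvPolynomial.coeff_sub, ih _ _ _ (by omega), ih _ _ _ (by omega), e,
      if_neg (c := ex (k + 1 + q * l) (j + (q - 1)) = s), sub_zero]
    intro h
    have := ex_zero (k + 1 + q * l) (j + (q - 1))
    rw [h] at this
    omega

theorem w_li (q : ℕ) (hq : 2 ≤ q) : LinearIndependent Fq (w Fq q) := by
  rw [linearIndependent_iff]
  intro c hc
  by_contra hne
  obtain ⟨s, hs, hmax⟩ := Finset.exists_max_image c.support (fun s => s.1)
    (Finsupp.support_nonempty_iff.mpr hne)
  have h0 := congrArg (MvPolynomial.coeff (ex s.1 s.2)) hc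
  rw [Finsupp.linearCombination_apply, Finsupp.sum, MvPolynomial.coeff_sum,
    Finset.sum_eq_single s] at h0
  · rw [MvPolynomial.coeff_smul, w, coeff_W q hq _ _ _ _ (by rw [ex_zero, Nat.mod_add_div]),
      Nat.mod_add_div, if_pos rfl] at h0
    simp at h0
    exact (Finsupp.mem_support_iff.mp hs) h0
  · intro t ht hts
    rw [MvPolynomial.coeff_smul, w, coeff_W q hq _ _ _ _
      (by rw [ex_zero, Nat.mod_add_div]; exact hmax t ht), Nat.mod_add_div, if_neg, smul_zero]
    intro h
    apply hts
    have h1 := congrArg (fun f => f 0) h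
    have h2 := congrArg (fun f => f 1) h
    simp only [ex_zero, ex_one] at h1 h2
    exact Prod.ext h1 h2
  · intro h; exact absurd hs h

theorem W_mem (q : ℕ) (hq : 2 ≤ q) (k : ℕ) : ∀ l j : ℕ, W Fq q k l j ∈
    Submodule.span Fq (w Fq q '' {s | s.1 + s.2 = k + q * l + j}) := by
  induction k using Nat.strong_induction_on with
  | _ k ih =>
    intro l j
    by_cases hk : k < q
    · apply Submodule.subset_span
      refine ⟨(k + q * l, j), rfl, ?_⟩
      unfold w
      rw [Nat.add_mul_mod_self_left, Nat.mod_eq_of_lt hk, Nat.add_mul_div_left _ _ (by omega),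
        Nat.div_eq_of_lt hk, zero_add]
    · obtain ⟨k', rfl⟩ : ∃ k', k = k' + q := ⟨k - q, by omega⟩
      have e : W Fq q (k' + q) l j = W Fq q k' (l + 1) j + W Fq q (k' + 1) l (j + (q - 1)) := by
        rw [W_succ]; ring
      rw [e]
      apply Submodule.add_mem
      · have := ih k' (by omega) (l + 1) j
        have e2 : k' + q * (l + 1) + j = k' + q + q * l + j := by ring
        rwa [e2] at this
      · have := ih (k' + 1) (by omega) l (j + (q - 1))
        have e2 : k' + 1 + q * l + (j + (q - 1)) = k' + q + q * l + j := by omega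
        rwa [e2] at this

theorem monomial_mem (q : ℕ) (hq : 2 ≤ q) (s : Fin 2 →₀ ℕ) : MvPolynomial.monomial s (1 : Fq) ∈
    Submodule.span Fq (w Fq q '' {t | t.1 + t.2 = s 0 + s 1}) := by
  have h := W_mem (Fq := Fq) q hq (s 0) 0 (s 1)
  rw [W_zero] at h
  have e : ex (s 0) (s 1) = s := by
    ext i; fin_cases i
    · exact ex_zero _ _
    · exact ex_one _ _
  rw [e] at h
  simpa using h

theorem w_span (q : ℕ) (hq : 2 ≤ q) : ⊤ ≤ Submodule.span Fq (Set.range (w Fq q)) := by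
  rw [← (MvPolynomial.basisMonomials (Fin 2) Fq).span_eq, Submodule.span_le]
  rintro _ ⟨s, rfl⟩
  rw [MvPolynomial.coe_basisMonomials]
  exact Submodule.span_mono (Set.image_subset_range _ _) (monomial_mem q hq s)

/-- The adapted basis. -/
noncomputable def bw (Fq : Type) [Field Fq] (q : ℕ) (hq : 2 ≤ q) :
    Module.Basis (ℕ × ℕ) Fq (MvPolynomial (Fin 2) Fq) :=
  Module.Basis.mk (w_li q hq) (w_span q hq)

theorem w_hom (q : ℕ) (hq : 2 ≤ q) (s : ℕ × ℕ) : (w Fq q s).IsHomogeneous (s.1 + s.2) := by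
  have hz : (zz Fq q).IsHomogeneous q := by
    unfold zz
    apply MvPolynomial.IsHomogeneous.sub
    · simpa using (MvPolynomial.isHomogeneous_X Fq (0 : Fin 2)).pow q
    · have := (MvPolynomial.isHomogeneous_X Fq (0 : Fin 2)).mul
        ((MvPolynomial.isHomogeneous_X Fq (1 : Fin 2)).pow (q - 1))
      have e : 1 + 1 * (q - 1) = q := by omega
      rwa [e] at this
  have := (((MvPolynomial.isHomogeneous_X Fq (0 : Fin 2)).pow (s.1 % q)).mul
    (hz.pow (s.1 / q))).mul ((MvPolynomial.isHomogeneous_X Fq (1 : Fin 2)).pow s.2)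
  rwa [one_mul, one_mul, Nat.mod_add_div] at this

theorem hom_eq (q : ℕ) (hq : 2 ≤ q) (d : ℕ) : MvPolynomial.homogeneousSubmodule (Fin 2) Fq d =
    Submodule.span Fq (w Fq q '' {t | t.1 + t.2 = d}) := by
  apply le_antisymm
  · intro f hf
    rw [MvPolynomial.mem_homogeneousSubmodule] at hf
    rw [f.as_sum]
    apply Submodule.sum_mem
    intro s hs
    have hd := hf (MvPolynomial.mem_support_iff.mp hs)
    have hd2 : s 0 + s 1 = d := by
      rw [← hd]
      simp [Finsupp.weight_apply, Finsupp.sum_fintype]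
    have := Submodule.smul_mem _ (MvPolynomial.coeff s f) (monomial_mem (Fq := Fq) q hq s)
    rw [MvPolynomial.smul_monomial, smul_eq_mul, mul_one, hd2] at this
    exact this
  · rw [Submodule.span_le]
    rintro _ ⟨s, rfl, rfl⟩
    exact w_hom q hq s

section action

theorem lsub_W [Fintype Fq] (q : ℕ) (hcard : Fintype.card Fq = q) (hq : 2 ≤ q)
    (g : Matrix (Fin 2) (Fin 2) Fq) (hg : g 1 0 = 0) (hd : g 1 1 ≠ 0) (k l j : ℕ) :
    lsub g (W Fq q k l j) = ∑ i ∈ Finset.range (k + 1),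
      ((k.choose i : Fq) * g 0 0 ^ (l + i) * g 0 1 ^ (k - i) * g 1 1 ^ j) •
        W Fq q i l (j + (k - i)) := by
  have h0 : lsub g (MvPolynomial.X 0) = g 0 0 • MvPolynomial.X 0 + g 0 1 • MvPolynomial.X 1 := by
    simp [lsub, MvPolynomial.smul_eq_C_mul]
  have h1 : lsub g (MvPolynomial.X 1) = g 1 1 • MvPolynomial.X 1 := by
    simp [lsub, hg, MvPolynomial.smul_eq_C_mul]
  have hd1 : g 1 1 ^ (q - 1) = 1 := by
    rw [← hcard]; exact FiniteField.pow_card_sub_one_eq_one _ hd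
  have hz : lsub g (zz Fq q) = g 0 0 • zz Fq q := by
    have hF := map_add (FiniteField.frobeniusAlgHom Fq (MvPolynomial (Fin 2) Fq))
      (g 0 0 • MvPolynomial.X 0) (g 0 1 • MvPolynomial.X 1)
    rw [map_smul, map_smul] at hF
    simp only [FiniteField.coe_frobeniusAlgHom, hcard] at hF
    have e : (MvPolynomial.X 1 : MvPolynomial (Fin 2) Fq) ^ q
        = MvPolynomial.X 1 * MvPolynomial.X 1 ^ (q - 1) := by
      rw [← pow_succ', Nat.sub_add_cancel (by omega)]
    unfold zz
    rw [map_sub, map_mul, map_pow, map_pow, h0, h1, hF, smul_pow, hd1, one_smul, e]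
    simp only [MvPolynomial.smul_eq_C_mul]
    ring
  unfold W
  rw [map_mul, map_mul, map_pow, map_pow, map_pow, h0, h1, hz, add_pow, Finset.sum_mul,
    Finset.sum_mul]
  apply Finset.sum_congr rfl
  intro i hi
  simp only [MvPolynomial.smul_eq_C_mul, MvPolynomial.C_mul, MvPolynomial.C_pow, map_natCast]
  ring

/-- Upper triangular matrix as an element of GL. -/
noncomputable def tri (a b d : Fq) (ha : a ≠ 0) (hd : d ≠ 0) : GL (Fin 2) Fq :=
  Matrix.GeneralLinearGroup.mkOfDetNeZero !![a, b; 0, d] (by simp [Matrix.det_fin_two, ha, hd])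

theorem sub_mem_NB (a b d : Fq) (ha : a ≠ 0) (hd : d ≠ 0) (f : MvPolynomial (Fin 2) Fq) :
    lsub !![a, b; 0, d] f - f ∈ NB Fq :=
  Submodule.subset_span ⟨tri a b d ha hd, by simp [Bset, tri, Matrix.GeneralLinearGroup.mkOfDetNeZero], f, rfl⟩

theorem tor_mem [Fintype Fq] (q : ℕ) (hcard : Fintype.card Fq = q) (hq : 2 ≤ q) (k l j : ℕ)
    (a d : Fq) (ha : a ≠ 0) (hd : d ≠ 0) (h : a ^ (l + k) * d ^ j ≠ 1) :
    W Fq q k l j ∈ NB Fq := by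
  have hm := sub_mem_NB a 0 d ha hd (W Fq q k l j)
  rw [lsub_W q hcard hq _ (by simp) (by simpa using hd), Finset.sum_range_succ,
    Finset.sum_eq_zero] at hm
  · simp at hm
    have e : (a ^ (l + k) * d ^ j) • W Fq q k l j - W Fq q k l j =
      (a ^ (l + k) * d ^ j - 1) • W Fq q k l j := by rw [sub_smul, one_smul]
    rw [e] at hm
    exact (Submodule.smul_mem_iff _ (sub_ne_zero.mpr h)).mp hm
  · intro i hi
    have : k - i ≠ 0 := by have := Finset.mem_range.mp hi; omega
    simp [this]

theorem tor_mem2 [Fintype Fq] (q : ℕ) (hcard : Fintype.card Fq = q) (hq : 2 ≤ q) (k l j : ℕ)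
    (h : ¬ ((q - 1) ∣ l + k ∧ (q - 1) ∣ j)) : W Fq q k l j ∈ NB Fq := by
  classical
  by_cases h1 : (q - 1) ∣ l + k
  · have h2 : ¬ (q - 1) ∣ j := fun h2 => h ⟨h1, h2⟩
    rw [← hcard, ← FiniteField.forall_pow_eq_one_iff Fq] at h2
    push Not at h2
    obtain ⟨d, hd⟩ := h2
    refine tor_mem q hcard hq k l j 1 d one_ne_zero d.ne_zero ?_
    rw [one_pow, one_mul]
    exact fun h => hd (Units.ext (by simpa using h))
  · rw [← hcard, ← FiniteField.forall_pow_eq_one_iff Fq] at h1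
    push Not at h1
    obtain ⟨d, hd⟩ := h1
    refine tor_mem q hcard hq k l j d 1 d.ne_zero one_ne_zero ?_
    rw [one_pow, mul_one]
    exact fun h => hd (Units.ext (by simpa using h))

theorem choose_ne [Fintype Fq] (q : ℕ) (hcard : Fintype.card Fq = q) (hq : 2 ≤ q) (k : ℕ)
    (hk : k ≤ q - 1) : ((q - 1).choose k : Fq) ≠ 0 := by
  obtain ⟨p, hp⟩ := CharP.exists Fq
  obtain ⟨n, hpp, hn⟩ := FiniteField.card Fq p
  rw [hcard] at hn
  induction k with
  | zero => simp
  | succ k ih =>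
    have h := ih (by omega)
    have h2 : (q.choose (k + 1) : Fq) = 0 := by
      rw [CharP.cast_eq_zero_iff Fq p, hn]
      apply hpp.dvd_choose_pow (by omega)
      rw [← hn]; omega
    have h3 : q.choose (k + 1) = (q - 1).choose k + (q - 1).choose (k + 1) := by
      conv_lhs => rw [show q = (q - 1) + 1 by omega]
      rw [Nat.choose_succ_succ]
    rw [h3] at h2
    push_cast at h2
    intro h4
    rw [h4, add_zero] at h2
    exact h h2

theorem uni_mem [Fintype Fq] (q : ℕ) (hcard : Fintype.card Fq = q) (hq : 2 ≤ q) (k l j : ℕ)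
    (hk : k < q - 1) (hj : j ≠ 0) : W Fq q k l j ∈ NB Fq := by
  by_cases ht : (q - 1) ∣ l + k ∧ (q - 1) ∣ j
  swap
  · exact tor_mem2 q hcard hq k l j ht
  have hjq : q - 1 ≤ j := Nat.le_of_dvd (by omega) ht.2
  obtain ⟨j', hj'⟩ : ∃ j', j = j' + (q - 1 - k) := ⟨j - (q - 1 - k), by omega⟩
  have hm := sub_mem_NB (1 : Fq) 1 1 one_ne_zero one_ne_zero (W Fq q (q - 1) l j')
  rw [lsub_W q hcard hq _ (by simp) (by simp), Finset.sum_range_succ] at hm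
  simp only [Matrix.of_apply, Matrix.cons_val', Matrix.cons_val_zero, Matrix.cons_val_one,
    one_pow, mul_one, Nat.choose_self, Nat.cast_one, one_smul, Nat.sub_self, add_zero,
    Matrix.cons_val_fin_one, add_sub_cancel_right] at hm
  rw [← Finset.add_sum_erase _ _ (Finset.mem_range.mpr hk), ← hj'] at hm
  have hr : ∑ i ∈ (Finset.range (q - 1)).erase k,
      ((q - 1).choose i : Fq) • W Fq q i l (j' + (q - 1 - i)) ∈ NB Fq := by
    apply Submodule.sum_mem
    intro i hi
    apply Submodule.smul_mem
    apply tor_mem2 q hcard hq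
    rintro ⟨h1, -⟩
    rw [Finset.mem_erase, Finset.mem_range] at hi
    apply hi.1
    have h2 : l + i ≡ l + k [MOD (q - 1)] :=
      ((Nat.modEq_zero_iff_dvd).mpr h1).trans ((Nat.modEq_zero_iff_dvd).mpr ht.1).symm
    have h3 := Nat.ModEq.add_left_cancel' _ h2
    exact Nat.ModEq.eq_of_lt_of_lt h3 hi.2 hk
  have := (Submodule.add_mem_iff_left _ hr).mp hm
  exact (Submodule.smul_mem_iff _ (choose_ne q hcard hq k hk.le)).mp this

end action

/-- Indices surviving in the cofixed space. -/
def good (q : ℕ) : Set (ℕ × ℕ) :=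
  {s | (q - 1) ∣ s.1 ∧ (q - 1) ∣ s.2 ∧ (s.1 % q = q - 1 ∨ s.2 = 0)}

theorem dvd_iff (q i : ℕ) (hq : 2 ≤ q) : (q - 1) ∣ i / q + i % q ↔ (q - 1) ∣ i := by
  conv_rhs => rw [← Nat.mod_add_div i q]
  have e : i % q + q * (i / q) = (q - 1) * (i / q) + (i / q + i % q) := by
    obtain ⟨r, rfl⟩ : ∃ r, q = r + 1 := ⟨q - 1, by omega⟩
    simp only [Nat.add_sub_cancel]; ring
  rw [e, ← Nat.dvd_add_right (Dvd.intro _ rfl)]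

theorem NB_eq [Fintype Fq] (q : ℕ) (hcard : Fintype.card Fq = q) (hq : 2 ≤ q) :
    NB Fq = Submodule.span Fq (w Fq q '' (good q)ᶜ) := by
  apply le_antisymm
  · unfold NB
    rw [Submodule.span_le]
    rintro _ ⟨g, hg, f, rfl⟩
    set M : Matrix (Fin 2) (Fin 2) Fq := (g : Matrix (Fin 2) (Fin 2) Fq) with hM
    have hg' : M 1 0 = 0 := hg
    have hdet : M.det ≠ 0 := (Matrix.isUnit_iff_isUnit_det M |>.mp g.isUnit).ne_zero
    rw [Matrix.det_fin_two, hg', mul_zero, sub_zero] at hdet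
    have ha : M 0 0 ≠ 0 := left_ne_zero_of_mul hdet
    have hd : M 1 1 ≠ 0 := right_ne_zero_of_mul hdet
    have hf : f ∈ Submodule.span Fq (Set.range (w Fq q)) := w_span q hq trivial
    induction hf using Submodule.span_induction with
    | zero => simp
    | add x y _ _ hx hy =>
      rw [map_add, add_sub_add_comm]; exact Submodule.add_mem _ hx hy
    | smul c x _ hx =>
      rw [map_smul, ← smul_sub]; exact Submodule.smul_mem _ _ hx
    | mem x hx =>
      obtain ⟨⟨i, j⟩, rfl⟩ := hx
      have hiq : i % q < q := Nat.mod_lt _ (by omega)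
      simp only [w, SetLike.mem_coe]
      rw [lsub_W q hcard hq M hg' hd, Finset.sum_range_succ, add_sub_assoc]
      apply Submodule.add_mem
      · apply Submodule.sum_mem
        intro n hn
        rw [Finset.mem_range] at hn
        apply Submodule.smul_mem
        apply Submodule.subset_span
        refine ⟨(n + q * (i / q), j + (i % q - n)), ?_, ?_⟩
        · rintro ⟨-, -, h | h⟩
          · simp only [Nat.add_mul_mod_self_left] at h
            rw [Nat.mod_eq_of_lt (by omega)] at h
            omega
          · simp only at h; omega
        · unfold w
          rw [Nat.add_mul_mod_self_left, Nat.mod_eq_of_lt (by omega),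
            Nat.add_mul_div_left _ _ (by omega), Nat.div_eq_of_lt (by omega), zero_add]
      · simp only [Nat.choose_self, Nat.cast_one, Nat.sub_self, pow_zero, mul_one, one_mul,
          add_zero]
        by_cases hgood : (i, j) ∈ good q
        · obtain ⟨h1, h2, -⟩ := hgood
          simp only at h1 h2
          rw [← dvd_iff q i hq] at h1
          obtain ⟨c, hc⟩ := h1
          obtain ⟨e, he⟩ := h2
          have ha1 : M 0 0 ^ (q - 1) = 1 := by
            rw [← hcard]; exact FiniteField.pow_card_sub_one_eq_one _ ha
          have hd1 : M 1 1 ^ (q - 1) = 1 := by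
            rw [← hcard]; exact FiniteField.pow_card_sub_one_eq_one _ hd
          have hh : M 0 0 ^ (i / q + i % q) * M 1 1 ^ j = 1 := by
            rw [hc, he, pow_mul, pow_mul, ha1, hd1, one_pow, one_pow, one_mul]
          rw [hh, one_smul, sub_self]
          exact Submodule.zero_mem _
        · have : W Fq q (i % q) (i / q) j ∈ Submodule.span Fq (w Fq q '' (good q)ᶜ) :=
            Submodule.subset_span ⟨(i, j), hgood, rfl⟩
          exact Submodule.sub_mem _ (Submodule.smul_mem _ _ this) this
  · rw [Submodule.span_le]
    rintro _ ⟨⟨i, j⟩, hs, rfl⟩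
    have hiq : i % q < q := Nat.mod_lt _ (by omega)
    by_cases ht : (q - 1) ∣ i / q + i % q ∧ (q - 1) ∣ j
    · have h3 : ¬ (i % q = q - 1 ∨ j = 0) := fun h =>
        hs ⟨(dvd_iff q i hq).mp ht.1, ht.2, h⟩
      push Not at h3
      exact uni_mem q hcard hq (i % q) (i / q) j (by omega) h3.2
    · exact tor_mem2 q hcard hq _ _ _ ht

theorem finrank_eq [Fintype Fq] (q : ℕ) (hcard : Fintype.card Fq = q) (hq : 2 ≤ q) (d : ℕ) :
    Module.finrank Fq (↥(MvPolynomial.homogeneousSubmodule (Fin 2) Fq d) ⧸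
        Submodule.comap (MvPolynomial.homogeneousSubmodule (Fin 2) Fq d).subtype (NB Fq)) =
      Nat.card {s : ℕ × ℕ // s.1 + s.2 = d ∧ s ∈ good q} := by
  have hb : ∀ s, bw Fq q hq s = w Fq q s := fun s => by simp [bw]
  have hb' : ⇑(bw Fq q hq) = w Fq q := funext hb
  let G : Set (ℕ × ℕ) := {s | s.1 + s.2 = d ∧ s ∈ good q}
  let φ : ↥(MvPolynomial.homogeneousSubmodule (Fin 2) Fq d) →ₗ[Fq] (G →₀ Fq) :=
    (Finsupp.lsubtypeDomain G) ∘ₗ (bw Fq q hq).repr.toLinearMap ∘ₗ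
      (MvPolynomial.homogeneousSubmodule (Fin 2) Fq d).subtype
  have hker : LinearMap.ker φ =
      Submodule.comap (MvPolynomial.homogeneousSubmodule (Fin 2) Fq d).subtype (NB Fq) := by
    ext ⟨f, hf⟩
    have hf' := hf
    rw [hom_eq q hq, ← hb', Module.Basis.mem_span_image] at hf'
    rw [LinearMap.mem_ker, Submodule.mem_comap, NB_eq q hcard hq, ← hb']
    simp only [Submodule.subtype_apply]
    rw [Module.Basis.mem_span_image]
    constructor
    · intro h s hs hg
      have h2 := DFunLike.congr_fun h ⟨s, hf' hs, hg⟩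
      exact (Finsupp.mem_support_iff.mp hs) h2
    · intro h
      ext ⟨s, hs⟩
      by_contra hne
      exact h (Finsupp.mem_support_iff.mpr hne) hs.2
  have hsurj : Function.Surjective φ := by
    rw [← LinearMap.range_eq_top, eq_top_iff]
    rw [← (Finsupp.basisSingleOne (R := Fq) (ι := G)).span_eq, Submodule.span_le]
    rintro _ ⟨⟨s, hs⟩, rfl⟩
    refine ⟨⟨w Fq q s, ?_⟩, ?_⟩
    · rw [hom_eq q hq]
      exact Submodule.subset_span ⟨s, hs.1, rfl⟩
    · ext ⟨t, ht⟩
      have : φ ⟨w Fq q s, by rw [hom_eq q hq]; exact Submodule.subset_span ⟨s, hs.1, rfl⟩⟩ ⟨t, ht⟩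
        = (bw Fq q hq).repr (w Fq q s) t := rfl
      rw [this, ← hb, Module.Basis.repr_self]
      simp [Finsupp.single_apply]
  rw [← hker, (φ.quotKerEquivOfSurjective hsurj).finrank_eq, Module.finrank_eq_nat_card_basis (Finsupp.basisSingleOne (R := Fq) (ι := G))]
  rfl

end Borel17

namespace Borel17

theorem periodic_series (P : ℕ → Prop) [DecidablePred P] (M : ℕ) (hP : ∀ n, P (n + M) ↔ P n) :
    (PowerSeries.mk fun n => if P n then (1 : ℚ) else 0) * (1 - PowerSeries.X ^ M) =
      ∑ n ∈ (Finset.range M).filter P, (PowerSeries.X : PowerSeries ℚ) ^ n := by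
  ext n
  rw [mul_sub, mul_one, map_sub, PowerSeries.coeff_mul_X_pow', map_sum]
  simp only [PowerSeries.coeff_mk, PowerSeries.coeff_X_pow]
  rw [Finset.sum_ite_eq]
  simp only [Finset.mem_filter, Finset.mem_range]
  by_cases h : M ≤ n
  · obtain ⟨m, rfl⟩ := Nat.exists_eq_add_of_le' h
    simp [hP]
  · simp [h, not_le.mp h]

theorem dvd_mod_aux (q i : ℕ) (hq : 2 ≤ q) (h : (q - 1) ∣ i) (h2 : i < q ^ 2 - q) :
    ∃ j < q, i = j * (q - 1) ∧ (i % q = q - 1 ↔ j = 1) := by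
  obtain ⟨j, rfl⟩ := h
  obtain ⟨r, rfl⟩ : ∃ r, q = r + 2 := ⟨q - 2, by omega⟩
  have e : r + 2 - 1 = r + 1 := by omega
  rw [e] at *
  have h3 : (r + 2) ^ 2 - (r + 2) = (r + 1) * (r + 2) := by
    have : (r + 2) ^ 2 = (r + 1) * (r + 2) + (r + 2) := by ring
    omega
  rw [h3] at h2
  have hj : j < r + 2 := lt_of_mul_lt_mul_left h2 (Nat.zero_le _)
  refine ⟨j, hj, mul_comm _ _, ?_⟩
  rcases Nat.eq_zero_or_pos j with rfl | hpos
  · simp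
  · obtain ⟨k, rfl⟩ : ∃ k, j = k + 1 := ⟨j - 1, by omega⟩
    obtain ⟨s, rfl⟩ : ∃ s, r = k + s := ⟨r - k, by omega⟩
    have e3 : (k + s + 1) * (k + 1) = (s + 1) + (k + s + 2) * k := by ring
    rw [e3, Nat.add_mul_mod_self_left, Nat.mod_eq_of_lt (by omega)]
    omega

theorem per_dvd (q : ℕ) : (q - 1) ∣ q ^ 2 - q :=
  ⟨q, by rw [Nat.sub_mul, one_mul, sq]⟩

theorem per_mod (q : ℕ) : q ∣ q ^ 2 - q :=
  ⟨q - 1, by rw [Nat.mul_sub, mul_one, sq]⟩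

theorem mod_add_per (q n : ℕ) : (n + (q ^ 2 - q)) % q = n % q := by
  obtain ⟨c, hc⟩ := per_mod q
  rw [hc, Nat.add_mul_mod_self_left]

theorem lt_per (q j : ℕ) (hq : 2 ≤ q) (hj : j < q) : j * (q - 1) < q ^ 2 - q := by
  have : q ^ 2 - q = q * (q - 1) := by rw [Nat.mul_sub, mul_one, sq]
  rw [this]
  exact Nat.mul_lt_mul_of_pos_right hj (by omega)

theorem serA (q : ℕ) (hq : 2 ≤ q) :
    (PowerSeries.mk fun n => if (q - 1) ∣ n ∧ n % q = q - 1 then (1 : ℚ) else 0) *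
      (1 - PowerSeries.X ^ (q ^ 2 - q)) = PowerSeries.X ^ (q - 1) := by
  rw [periodic_series _ _ (fun n => by rw [mod_add_per, Nat.dvd_add_left (per_dvd q)])]
  have : (Finset.range (q ^ 2 - q)).filter (fun n => (q - 1) ∣ n ∧ n % q = q - 1) = {q - 1} := by
    ext n
    simp only [Finset.mem_filter, Finset.mem_range, Finset.mem_singleton]
    constructor
    · rintro ⟨h1, h2, h3⟩
      obtain ⟨j, hj, rfl, h4⟩ := dvd_mod_aux q n hq h2 h1
      rw [h4.mp h3, one_mul]
    · rintro rfl
      refine ⟨?_, dvd_rfl, Nat.mod_eq_of_lt (by omega)⟩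
      have := lt_per q 1 hq (by omega)
      rwa [one_mul] at this
  rw [this, Finset.sum_singleton]

theorem serE (q : ℕ) (hq : 2 ≤ q) :
    (PowerSeries.mk fun n => if (q - 1) ∣ n ∧ n % q ≠ q - 1 then (1 : ℚ) else 0) *
      (1 - PowerSeries.X ^ (q ^ 2 - q)) =
      1 + ∑ j ∈ Finset.Icc 2 (q - 1), (PowerSeries.X : PowerSeries ℚ) ^ (j * (q - 1)) := by
  rw [periodic_series _ _ (fun n => by rw [mod_add_per, Nat.dvd_add_left (per_dvd q)])]
  have : (Finset.range (q ^ 2 - q)).filter (fun n => (q - 1) ∣ n ∧ n % q ≠ q - 1) =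
      (insert 0 (Finset.Icc 2 (q - 1))).image (fun j => j * (q - 1)) := by
    ext n
    simp only [Finset.mem_filter, Finset.mem_range, Finset.mem_image, Finset.mem_insert,
      Finset.mem_Icc]
    constructor
    · rintro ⟨h1, h2, h3⟩
      obtain ⟨j, hj, rfl, h4⟩ := dvd_mod_aux q n hq h2 h1
      refine ⟨j, ?_, rfl⟩
      have : j ≠ 1 := fun h => h3 (h4.mpr h)
      omega
    · rintro ⟨j, hj, rfl⟩
      have hlt := lt_per q j hq (by omega)
      refine ⟨hlt, Dvd.intro_left _ rfl, ?_⟩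
      obtain ⟨j', hj', e, h4⟩ := dvd_mod_aux q _ hq (Dvd.intro_left j rfl) hlt
      have : j = j' := Nat.eq_of_mul_eq_mul_right (by omega) e
      intro h
      have := h4.mp h
      omega
  rw [this, Finset.sum_image, Finset.sum_insert (by simp), zero_mul, pow_zero]
  intro a _ b _ h
  exact Nat.eq_of_mul_eq_mul_right (by omega) h

theorem serJ (q : ℕ) (hq : 2 ≤ q) :
    (PowerSeries.mk fun n => if (q - 1) ∣ n then (1 : ℚ) else 0) *
      (1 - PowerSeries.X ^ (q - 1)) = 1 := by
  rw [periodic_series _ _ (fun n => by rw [Nat.dvd_add_left dvd_rfl])]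
  have : (Finset.range (q - 1)).filter (fun n => (q - 1) ∣ n) = {0} := by
    ext n
    simp only [Finset.mem_filter, Finset.mem_range, Finset.mem_singleton]
    constructor
    · rintro ⟨h1, h2⟩
      exact Nat.eq_zero_of_dvd_of_lt h2 h1
    · rintro rfl
      exact ⟨by omega, dvd_zero _⟩
  rw [this, Finset.sum_singleton, pow_zero]


end Borel17
namespace Borel17
theorem card_good (q d : ℕ) :
    (Nat.card {s : ℕ × ℕ // s.1 + s.2 = d ∧ s ∈ good q} : ℚ) = PowerSeries.coeff d
      ((PowerSeries.mk fun n => if (q - 1) ∣ n ∧ n % q = q - 1 then (1 : ℚ) else 0) *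
        (PowerSeries.mk fun n => if (q - 1) ∣ n then (1 : ℚ) else 0) +
        (PowerSeries.mk fun n => if (q - 1) ∣ n ∧ n % q ≠ q - 1 then (1 : ℚ) else 0)) := by
  classical
  have h1 : Nat.card {s : ℕ × ℕ // s.1 + s.2 = d ∧ s ∈ good q} =
      ((Finset.HasAntidiagonal.antidiagonal d).filter (fun s => s ∈ good q)).card := by
    rw [← Nat.card_eq_finsetCard]
    apply Nat.card_congr
    apply Equiv.subtypeEquivRight
    intro s
    simp
  have hE : (PowerSeries.mk fun n => if (q - 1) ∣ n ∧ n % q ≠ q - 1 then (1 : ℚ) else 0) =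
      (PowerSeries.mk fun n => if (q - 1) ∣ n ∧ n % q ≠ q - 1 then (1 : ℚ) else 0) *
      (PowerSeries.mk fun n => if n = 0 then (1 : ℚ) else 0) := by
    have : (PowerSeries.mk fun n => if n = 0 then (1 : ℚ) else 0) = 1 := by
      ext n; simp [PowerSeries.coeff_one]
    rw [this, mul_one]
  rw [h1, hE, map_add, PowerSeries.coeff_mul, PowerSeries.coeff_mul, ← Finset.sum_add_distrib,
    Finset.card_filter]
  push_cast
  apply Finset.sum_congr rfl
  rintro ⟨i, j⟩ -
  simp only [PowerSeries.coeff_mk, good, Set.mem_setOf_eq]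
  by_cases a1 : (q - 1) ∣ i
  · by_cases a2 : (q - 1) ∣ j
    · by_cases a3 : i % q = q - 1 <;> by_cases a4 : j = 0 <;> simp [a1, a2, a3, a4]
    · have a4 : j ≠ 0 := by rintro rfl; exact a2 (dvd_zero _)
      simp [a1, a2, a4]
  · simp [a1]

theorem one_sub_inv (f g : PowerSeries ℚ) (n : ℕ) (hn : n ≠ 0)
    (H : f * (1 - PowerSeries.X ^ n) = g) : f = g * (1 - PowerSeries.X ^ n)⁻¹ := by
  rw [PowerSeries.eq_mul_inv_iff_mul_eq]
  · exact H
  · simp [hn]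

end Borel17
/-- Theorem: the Borel-cofixed space `S_B` of `S = F_q[x,y]` has Hilbert series
`t^{q−1}/((1−t^{q−1})(1−t^{q²−q})) + (1 + Σ_{j=2}^{q−1} t^{j(q−1)})/(1−t^{q²−q})`. -/
theorem statement17 (q : ℕ) (hq : IsPrimePow q) (Fq : Type) [Field Fq] [Fintype Fq]
    (hcard : Fintype.card Fq = q) :
    hilbQuot Fq (NB Fq)
      = (PowerSeries.X : PowerSeries ℚ) ^ (q - 1) *
          ((1 - (PowerSeries.X : PowerSeries ℚ) ^ (q - 1))⁻¹ *
            (1 - (PowerSeries.X : PowerSeries ℚ) ^ (q ^ 2 - q))⁻¹) +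
        (1 + ∑ j ∈ Finset.Icc 2 (q - 1), (PowerSeries.X : PowerSeries ℚ) ^ (j * (q - 1))) *
          (1 - (PowerSeries.X : PowerSeries ℚ) ^ (q ^ 2 - q))⁻¹ := by
  have hq2 : 2 ≤ q := hq.two_le
  have hper : q ^ 2 - q ≠ 0 := by
    have := Borel17.lt_per q 0 hq2 (by omega)
    omega
  rw [← mul_assoc, mul_right_comm,
    ← Borel17.one_sub_inv _ _ _ hper (Borel17.serA q hq2),
    ← Borel17.one_sub_inv _ _ _ hper (Borel17.serE q hq2),
    ← one_mul (1 - (PowerSeries.X : PowerSeries ℚ) ^ (q - 1))⁻¹,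
    ← Borel17.one_sub_inv _ _ _ (by omega) (Borel17.serJ q hq2)]
  ext d
  rw [← Borel17.card_good, hilbQuot, PowerSeries.coeff_mk, Borel17.finrank_eq q hcard hq2]
end

section
/- Let q be a prime power, S = F_q[x,y], and G = GL_2(F_q). Then the graded G-cofixed space S_G has Hilbert series Hilb(S_G, t) = 1 + t^{2(q−1)}/(1−t^{q−1}) + t^{2(q²−1)}/((1−t^{q²−1})(1−t^{q²−q})) as an identity in ℤ[[t]]. -/
open Finset Matrix MvPolynomial PowerSeries

set_option linter.unusedSectionVars false
set_option linter.unusedSimpArgs false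
namespace GLCofixed
variable {F : Type} [Field F]
local notation "MM" => MvPolynomial (Fin 2) F
local notation "xx" => (MvPolynomial.X 0 : MvPolynomial (Fin 2) F)
local notation "yy" => (MvPolynomial.X 1 : MvPolynomial (Fin 2) F)
local notation "qq" => Fintype.card F

/-! ### Basic facts on the action -/

theorem lsub_xx (g : Matrix (Fin 2) (Fin 2) F) :
    lsub g xx = MvPolynomial.C (g 0 0) * xx + MvPolynomial.C (g 0 1) * yy := by
  simp [lsub, Fin.sum_univ_two]

theorem lsub_yy (g : Matrix (Fin 2) (Fin 2) F) :
    lsub g yy = MvPolynomial.C (g 1 0) * xx + MvPolynomial.C (g 1 1) * yy := by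
  simp [lsub, Fin.sum_univ_two]

theorem lsub_C (g : Matrix (Fin 2) (Fin 2) F) (a : F) :
    lsub g (MvPolynomial.C a) = MvPolynomial.C a := by
  simp [lsub]

theorem lsub_comp (h g : Matrix (Fin 2) (Fin 2) F) (f : MM) :
    lsub g (lsub h f) = lsub (h * g) f := by
  have : (lsub g).comp (lsub h) = lsub (h * g) := by
    apply MvPolynomial.algHom_ext
    intro i
    fin_cases i
    · simp only [AlgHom.comp_apply, Fin.zero_eta, lsub_xx, map_add, map_mul, lsub_C, lsub_yy,
        Matrix.mul_apply, Fin.sum_univ_two]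
      ring
    · simp only [AlgHom.comp_apply, Fin.mk_one, lsub_xx, map_add, map_mul, lsub_C, lsub_yy,
        Matrix.mul_apply, Fin.sum_univ_two]
      ring
  rw [← this]; rfl

theorem lsub_one (f : MM) : lsub (1 : Matrix (Fin 2) (Fin 2) F) f = f := by
  have : lsub (1 : Matrix (Fin 2) (Fin 2) F) = AlgHom.id F MM := by
    apply MvPolynomial.algHom_ext
    intro i
    fin_cases i
    · simp [lsub_xx]
    · simp [lsub_yy]
  rw [this]; rfl

theorem lsub_hom (g : Matrix (Fin 2) (Fin 2) F) {f : MM} {d : ℕ} (hf : f.IsHomogeneous d) :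
    (lsub g f).IsHomogeneous d := by
  have := hf.aeval (fun i => ∑ j, MvPolynomial.C (g i j) * MvPolynomial.X j) (n := 1) (by
    intro i
    apply MvPolynomial.IsHomogeneous.sum
    intro j _
    exact MvPolynomial.isHomogeneous_C_mul_X _ _)
  simpa [lsub] using! this

theorem eval_lsub (g : Matrix (Fin 2) (Fin 2) F) (f : MM) (v : Fin 2 → F) :
    MvPolynomial.aeval v (lsub g f) = MvPolynomial.aeval (g.mulVec v) f := by
  have : (MvPolynomial.aeval v : MM →ₐ[F] F).comp (lsub g) = MvPolynomial.aeval (g.mulVec v) := by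
    apply MvPolynomial.algHom_ext
    intro i
    fin_cases i
    · simp [lsub_xx]
    · simp [lsub_yy]
  rw [← this]; rfl

theorem eval_smul_hom {f : MM} {d : ℕ} (hf : f.IsHomogeneous d) (c : F) (v : Fin 2 → F) :
    MvPolynomial.aeval (c • v) f = c ^ d * MvPolynomial.aeval v f := by
  rw [MvPolynomial.aeval_def, MvPolynomial.aeval_def, MvPolynomial.eval₂_eq, MvPolynomial.eval₂_eq,
    Finset.mul_sum]
  apply Finset.sum_congr rfl
  intro s hs
  have h1 := hf.degree_eq_sum_deg_support hs
  have h2 : ∏ i ∈ s.support, (c • v) i ^ s i = c ^ d * ∏ i ∈ s.support, v i ^ s i := by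
    simp only [Pi.smul_apply, smul_eq_mul, mul_pow, Finset.prod_mul_distrib,
      Finset.prod_pow_eq_pow_sum]
    rw [h1]
  rw [h2]; ring

/-- monomials in two variables -/
theorem monomial_eq' (u : Fin 2 →₀ ℕ) (a : F) :
    MvPolynomial.monomial u a = a • (xx ^ (u 0) * yy ^ (u 1)) := by
  rw [MvPolynomial.monomial_eq, Finsupp.prod_fintype _ _ (by simp), Fin.prod_univ_two,
    MvPolynomial.smul_eq_C_mul]

theorem poly_induction {p : MM → Prop} (hadd : ∀ f g, p f → p g → p (f + g))
    (hsmul : ∀ (a : F) f, p f → p (a • f)) (hm : ∀ i j, p (xx ^ i * yy ^ j)) (f : MM) : p f := by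
  induction f using MvPolynomial.induction_on' with
  | monomial u a => rw [monomial_eq']; exact hsmul _ _ (hm _ _)
  | add f g hf hg => exact hadd _ _ hf hg

theorem coeff_xy (i j : ℕ) (u : Fin 2 →₀ ℕ) :
    MvPolynomial.coeff u (xx ^ i * yy ^ j) = if u 0 = i ∧ u 1 = j then 1 else 0 := by
  have : xx ^ i * yy ^ j = MvPolynomial.monomial (Finsupp.single 0 i + Finsupp.single 1 j) 1 := by
    rw [monomial_eq']; simp
  rw [this, MvPolynomial.coeff_monomial]
  congr 1
  rw [Finsupp.ext_iff]
  simp [Fin.forall_fin_two, eq_comm]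

/-- homogeneous factors -/
theorem hom_factor {L k : MM} {a e : ℕ} (hL : L.IsHomogeneous a) (hL0 : L ≠ 0)
    (hLk : (L * k).IsHomogeneous e) : k = 0 ∨ (a ≤ e ∧ k.IsHomogeneous (e - a)) := by
  let _ := MvPolynomial.gradedAlgebra (σ := Fin 2) (R := F)
  have hmem : L ∈ MvPolynomial.homogeneousSubmodule (Fin 2) F a := hL
  have hmem2 : L * k ∈ MvPolynomial.homogeneousSubmodule (Fin 2) F e := hLk
  by_cases h : a ≤ e
  · right
    refine ⟨h, ?_⟩
    have h1 := DirectSum.coe_decompose_mul_of_left_mem_of_le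
      (MvPolynomial.homogeneousSubmodule (Fin 2) F) (b := k) hmem h
    rw [DirectSum.decompose_of_mem_same _ hmem2] at h1
    have h2 := mul_left_cancel₀ hL0 h1
    rw [h2]
    show _ ∈ MvPolynomial.homogeneousSubmodule (Fin 2) F (e - a)
    exact (DirectSum.decompose (MvPolynomial.homogeneousSubmodule (Fin 2) F) k (e - a)).2
  · left
    have h1 := DirectSum.coe_decompose_mul_of_left_mem_of_not_le
      (MvPolynomial.homogeneousSubmodule (Fin 2) F) (b := k) hmem h
    rw [DirectSum.decompose_of_mem_same _ hmem2] at h1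
    exact (mul_eq_zero.1 h1).resolve_left hL0

/-- Divisibility by powers of `y`. -/
theorem yy_pow_dvd_iff (n : ℕ) (f : MM) :
    yy ^ n ∣ f ↔ ∀ u : Fin 2 →₀ ℕ, MvPolynomial.coeff u f ≠ 0 → n ≤ u 1 := by
  constructor
  · rintro ⟨k, rfl⟩ u hu
    by_contra h
    apply hu
    rw [MvPolynomial.X_pow_eq_monomial, MvPolynomial.coeff_monomial_mul', if_neg]
    intro h2
    apply h
    simpa using h2 1
  · intro h
    rw [MvPolynomial.as_sum f]
    apply Finset.dvd_sum
    intro u hu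
    rw [monomial_eq', MvPolynomial.smul_eq_C_mul]
    have := h u (MvPolynomial.mem_support_iff.1 hu)
    exact Dvd.dvd.mul_left (Dvd.dvd.mul_left (pow_dvd_pow _ this) _) _

/-- A homogeneous polynomial vanishing at `(1,0)` is divisible by `y`. -/
theorem yy_dvd_of_eval {f : MM} {d : ℕ} (hf : f.IsHomogeneous d)
    (h : MvPolynomial.aeval (![1, 0] : Fin 2 → F) f = 0) : yy ∣ f := by
  rw [← pow_one yy, yy_pow_dvd_iff]
  intro u hu
  by_contra hlt
  have hu1 : u 1 = 0 := by omega
  apply hu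
  rw [MvPolynomial.aeval_def, MvPolynomial.eval₂_eq] at h
  rw [Finset.sum_eq_single u] at h
  · have : ∏ i ∈ u.support, (![1, 0] : Fin 2 → F) i ^ u i = 1 := by
      have := Finsupp.prod_fintype u (fun i n => (![1, 0] : Fin 2 → F) i ^ n) (by simp)
      rw [Finsupp.prod] at this
      rw [this, Fin.prod_univ_two]
      simp [hu1]
    rw [this] at h
    simpa using h
  · intro w hw hwu
    have hw' := hf.degree_eq_sum_deg_support hw
    have hu' := hf.degree_eq_sum_deg_support (MvPolynomial.mem_support_iff.2 hu)
    have e1 : ∀ s : Fin 2 →₀ ℕ, ∑ i ∈ s.support, s i = s 0 + s 1 := by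
      intro s
      have := Finsupp.sum_fintype s (fun i n => n) (by simp)
      rw [Finsupp.sum] at this
      rw [this, Fin.sum_univ_two]
    rw [e1] at hw' hu'
    have hw1 : w 1 ≠ 0 := by
      intro h0
      apply hwu
      ext i
      fin_cases i
      · simp; omega
      · simp; omega
    have := Finsupp.prod_fintype w (fun i n => (![1, 0] : Fin 2 → F) i ^ n) (by simp)
    rw [Finsupp.prod] at this
    rw [this, Fin.prod_univ_two]
    simp [hw1]
  · intro hn
    rw [MvPolynomial.notMem_support_iff.1 hn]; simp

theorem eval_of_yy_dvd {f : MM} (h : yy ∣ f) :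
    MvPolynomial.aeval (![1, 0] : Fin 2 → F) f = 0 := by
  obtain ⟨k, rfl⟩ := h
  simp

/-! ### Power sums and the Borel subgroup -/
variable [Fintype F] [DecidableEq F]

theorem two_le_card : 2 ≤ qq := Fintype.one_lt_card

theorem sum_pow_F (i : ℕ) :
    ∑ a : F, a ^ i = if 0 < i ∧ qq - 1 ∣ i then -1 else 0 := by
  have h : ∑ a : F, a ^ i = 0 ^ i + ∑ a : Fˣ, (a : F) ^ i := by
    have := Fintype.sum_eq_add_sum_compl (0 : F) (fun a => a ^ i)
    rw [this]
    congr 1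
    symm
    refine Finset.sum_bij (fun a _ => (a : F)) ?_ ?_ ?_ ?_
    · simp
    · intro a _ b _ h; exact Units.ext h
    · intro b hb; exact ⟨Units.mk0 b (by simpa using hb), by simp⟩
    · simp
  rw [h, FiniteField.sum_pow_units]
  rcases Nat.eq_zero_or_pos i with rfl | hi
  · simp
  · simp [hi, hi.ne']

theorem unit_pow_card (a : Fˣ) : (a : F) ^ (qq - 1) = 1 :=
  FiniteField.pow_card_sub_one_eq_one _ a.ne_zero

theorem unit_pow_dvd (a : Fˣ) {i : ℕ} (h : qq - 1 ∣ i) : (a : F) ^ i = 1 := by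
  obtain ⟨k, rfl⟩ := h
  rw [pow_mul, unit_pow_card, one_pow]

theorem exists_unit_pow_ne {i : ℕ} (h : ¬ qq - 1 ∣ i) : ∃ a : Fˣ, (a : F) ^ i ≠ 1 := by
  rw [← FiniteField.forall_pow_eq_one_iff F i] at h
  push Not at h
  obtain ⟨a, ha⟩ := h
  exact ⟨a, fun h => ha (Units.ext (by simpa using h))⟩

theorem card_sub_one_cast : ((qq - 1 : ℕ) : F) = -1 := by
  rw [Nat.cast_sub (by have := two_le_card (F := F); omega)]
  simp

theorem frob_add (f g : MM) : (f + g) ^ qq = f ^ qq + g ^ qq := by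
  have := map_add (FiniteField.frobeniusAlgHom F MM) f g
  simpa using! this

theorem frob_C (a : F) : (MvPolynomial.C a : MM) ^ qq = MvPolynomial.C a := by
  rw [← map_pow, FiniteField.pow_card]

/-- Elements of the Borel subgroup. -/
noncomputable def bm (p : Fˣ × Fˣ × F) : GL (Fin 2) F :=
  Matrix.GeneralLinearGroup.mkOfDetNeZero !![(p.1 : F), p.2.2; 0, (p.2.1 : F)]
    (by simp [Matrix.det_fin_two])

theorem bm_val (p : Fˣ × Fˣ × F) : (bm p : Matrix (Fin 2) (Fin 2) F) =
    !![(p.1 : F), p.2.2; 0, (p.2.1 : F)] := rfl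

theorem bm_inj : Function.Injective (bm (F := F)) := by
  rintro ⟨a, d, c⟩ ⟨a', d', c'⟩ h
  rw [Units.ext_iff, bm_val, bm_val] at h
  have h00 := congrFun (congrFun h 0) 0
  have h01 := congrFun (congrFun h 0) 1
  have h11 := congrFun (congrFun h 1) 1
  simp at h00 h01 h11
  simp [Units.ext_iff, h00, h01, h11]

theorem bm_mul (p p' : Fˣ × Fˣ × F) : bm p * bm p' =
    bm (p.1 * p'.1, p.2.1 * p'.2.1, p.1 * p'.2.2 + p.2.2 * p'.2.1) := by
  rw [Units.ext_iff, Units.val_mul, bm_val, bm_val, bm_val]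
  ext i j
  fin_cases i <;> fin_cases j <;> simp [Matrix.mul_apply, Fin.sum_univ_two]

theorem bm_one : bm (1, 1, 0) = (1 : GL (Fin 2) F) := by
  rw [Units.ext_iff, bm_val]
  ext i j
  fin_cases i <;> fin_cases j <;> simp

theorem bm_inv (p : Fˣ × Fˣ × F) :
    ∃ p', (bm p)⁻¹ = bm p' := by
  refine ⟨(p.1⁻¹, p.2.1⁻¹, - ((p.1⁻¹ : Fˣ) : F) * p.2.2 * ((p.2.1⁻¹ : Fˣ) : F)), ?_⟩
  rw [_root_.inv_eq_iff_mul_eq_one, bm_mul, ← bm_one]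
  congr 1
  ext <;> simp
  ring_nf
  simp

/-- Coset representatives. -/
noncomputable def rm : Option F → GL (Fin 2) F
  | none => 1
  | some s => Matrix.GeneralLinearGroup.mkOfDetNeZero !![s, 1; 1, 0] (by simp [Matrix.det_fin_two])

theorem rm_val_some (s : F) : (rm (some s) : Matrix (Fin 2) (Fin 2) F) = !![s, 1; 1, 0] := rfl

theorem rb_inj : Function.Injective
    (fun z : Option F × (Fˣ × Fˣ × F) => rm z.1 * bm z.2) := by
  rintro ⟨r, a, d, c⟩ ⟨r', a', d', c'⟩ h
  simp only at h
  rw [Units.ext_iff, Units.val_mul, Units.val_mul, bm_val, bm_val] at h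
  have h00 := congrFun (congrFun h 0) 0
  have h01 := congrFun (congrFun h 0) 1
  have h10 := congrFun (congrFun h 1) 0
  have h11 := congrFun (congrFun h 1) 1
  rcases r with _ | s <;> rcases r' with _ | s'
  · simp [rm] at h00 h01 h11
    simp [Units.ext_iff, h00, h01, h11]
  · simp [rm_val_some, rm, Matrix.mul_apply, Fin.sum_univ_two] at h10
    exact absurd h10.symm a'.ne_zero
  · simp [rm_val_some, rm, Matrix.mul_apply, Fin.sum_univ_two] at h10
  · simp [rm_val_some, Matrix.mul_apply, Fin.sum_univ_two] at h00 h01 h10 h11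
    have h10' := Units.ext h10
    subst h10' h11
    have : s = s' := by simpa using h00
    subst this
    simp at h01
    simp [Units.ext_iff, h01]

theorem rb_bij : Function.Bijective
    (fun z : Option F × (Fˣ × Fˣ × F) => rm z.1 * bm z.2) := by
  rw [Fintype.bijective_iff_injective_and_card]
  refine ⟨rb_inj, ?_⟩
  rw [← Nat.card_eq_fintype_card (α := GL (Fin 2) F), Matrix.card_GL_field]
  simp only [Fintype.card_prod, Fintype.card_option, Fintype.card_units, Fin.prod_univ_two]
  have h2 := two_le_card (F := F)
  obtain ⟨m, hm⟩ : ∃ m, qq = m + 1 := ⟨qq - 1, by omega⟩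
  rw [hm]
  have e1 : (m + 1) ^ 2 - (m + 1) ^ ((0 : Fin 2) : ℕ) = m * (m + 2) := by
    simp; ring_nf; omega
  have e2 : (m + 1) ^ 2 - (m + 1) ^ ((1 : Fin 2) : ℕ) = m * (m + 1) := by
    simp; ring_nf; omega
  rw [e1, e2]
  simp
  ring

/-- Transfer for `G`. -/
noncomputable def TG : MM →ₗ[F] MM :=
  ∑ g : GL (Fin 2) F, (lsub (g : Matrix (Fin 2) (Fin 2) F)).toLinearMap

/-- Transfer for the Borel subgroup. -/
noncomputable def TB : MM →ₗ[F] MM :=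
  ∑ p : Fˣ × Fˣ × F, (lsub (bm p : Matrix (Fin 2) (Fin 2) F)).toLinearMap

theorem TG_apply (f : MM) : TG f = ∑ g : GL (Fin 2) F, lsub (g : Matrix (Fin 2) (Fin 2) F) f := by
  simp [TG, LinearMap.sum_apply]

theorem TB_apply (f : MM) :
    TB f = ∑ p : Fˣ × Fˣ × F, lsub (bm p : Matrix (Fin 2) (Fin 2) F) f := by
  simp [TB, LinearMap.sum_apply]

theorem TG_lsub (g : GL (Fin 2) F) (f : MM) :
    TG (lsub (g : Matrix (Fin 2) (Fin 2) F) f) = TG f := by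
  rw [TG_apply, TG_apply]
  simp_rw [lsub_comp, ← Units.val_mul]
  exact Equiv.sum_comp (Equiv.mulLeft g) (fun h => lsub (h : Matrix (Fin 2) (Fin 2) F) f)

theorem lsub_TG (g : GL (Fin 2) F) (f : MM) :
    lsub (g : Matrix (Fin 2) (Fin 2) F) (TG f) = TG f := by
  rw [TG_apply, map_sum]
  simp_rw [lsub_comp, ← Units.val_mul]
  exact Equiv.sum_comp (Equiv.mulRight g) (fun h => lsub (h : Matrix (Fin 2) (Fin 2) F) f)

theorem TB_lsub (p0 : Fˣ × Fˣ × F) (f : MM) :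
    TB (lsub (bm p0 : Matrix (Fin 2) (Fin 2) F) f) = TB f := by
  rw [TB_apply, TB_apply]
  simp_rw [lsub_comp, ← Units.val_mul]
  choose e he using fun p => (⟨_, bm_mul p0 p⟩ : ∃ p', bm p0 * bm p = bm p')
  have hinj : Function.Injective e := by
    intro a b hab
    have := congrArg bm hab
    rw [← he, ← he] at this
    exact bm_inj (mul_left_cancel this)
  refine Fintype.sum_bijective e hinj.bijective_of_finite _ _ ?_
  intro p
  rw [he]

theorem TB_inv (f : MM) :
    ∑ p : Fˣ × Fˣ × F, lsub ((bm p)⁻¹ : GL (Fin 2) F).1 f = TB f := by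
  rw [TB_apply]
  choose e he using bm_inv (F := F)
  have hinj : Function.Injective e := by
    intro a b hab
    have := congrArg bm hab
    rw [← he, ← he] at this
    exact bm_inj (inv_injective this)
  refine Fintype.sum_bijective e hinj.bijective_of_finite _ _ ?_
  intro p
  rw [he]

theorem TG_eq_TB (f : MM) :
    TG f = TB (∑ r : Option F, lsub (rm r : Matrix (Fin 2) (Fin 2) F) f) := by
  rw [TG_apply, ← Fintype.sum_bijective _ rb_bij (fun z => lsub ((rm z.1 * bm z.2 : GL (Fin 2) F)
    : Matrix (Fin 2) (Fin 2) F) f) _ (fun _ => rfl), Fintype.sum_prod_type, map_sum]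
  apply Finset.sum_congr rfl
  intro r _
  rw [TB_apply]
  simp [lsub_comp]

theorem TG_eq_TB' (f : MM) :
    TG f = ∑ r : Option F, lsub ((rm r)⁻¹ : GL (Fin 2) F).1 (TB f) := by
  have h : TG f = ∑ g : GL (Fin 2) F, lsub (g⁻¹ : GL (Fin 2) F).1 f := by
    rw [TG_apply]
    exact (Equiv.sum_comp (Equiv.inv (GL (Fin 2) F)) (fun g => lsub g.1 f)).symm
  rw [h, ← Fintype.sum_bijective _ rb_bij
    (fun z => lsub ((rm z.1 * bm z.2 : GL (Fin 2) F)⁻¹ : GL (Fin 2) F).1 f) _ (fun _ => rfl),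
    Fintype.sum_prod_type]
  apply Finset.sum_congr rfl
  intro r _
  rw [← TB_inv, map_sum]
  apply Finset.sum_congr rfl
  intro p _
  rw [lsub_comp, ← Units.val_mul, _root_.mul_inv_rev]

/-- Span for the Borel subgroup. -/
noncomputable def NB (F : Type) [Field F] : Submodule F (MvPolynomial (Fin 2) F) :=
  Submodule.span F {h | ∃ p : Fˣ × Fˣ × F, ∃ f : MvPolynomial (Fin 2) F,
    h = lsub (bm p : Matrix (Fin 2) (Fin 2) F) f - f}

theorem NB_le : NB F ≤ NG F := by
  rw [NB, Submodule.span_le]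
  rintro _ ⟨p, f, rfl⟩
  exact Submodule.subset_span ⟨bm p, f, rfl⟩

theorem TB_NB {f : MM} (hf : f ∈ NB F) : TB f = 0 := by
  have : NB F ≤ LinearMap.ker (TB (F := F)) := by
    rw [NB, Submodule.span_le]
    rintro _ ⟨p, f, rfl⟩
    simp [TB_lsub]
  exact this hf

theorem TG_NG {f : MM} (hf : f ∈ NG F) : TG f = 0 := by
  have : NG F ≤ LinearMap.ker (TG (F := F)) := by
    rw [NG, Submodule.span_le]
    rintro _ ⟨p, f, rfl⟩
    simp [TG_lsub]
  exact this hf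

/-! ### The form `x^q - x y^(q-1)` and reduction modulo the Borel span -/

/-- `x^q - x y^(q-1)` -/
noncomputable def Xq (F : Type) [Field F] [Fintype F] : MvPolynomial (Fin 2) F :=
  MvPolynomial.X 0 ^ Fintype.card F - MvPolynomial.X 0 * MvPolynomial.X 1 ^ (Fintype.card F - 1)

theorem bm_xx (p : Fˣ × Fˣ × F) : lsub (bm p : Matrix (Fin 2) (Fin 2) F) xx =
    MvPolynomial.C (p.1 : F) * xx + MvPolynomial.C p.2.2 * yy := by
  rw [lsub_xx, bm_val]; simp

theorem bm_yy (p : Fˣ × Fˣ × F) : lsub (bm p : Matrix (Fin 2) (Fin 2) F) yy =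
    MvPolynomial.C (p.2.1 : F) * yy := by
  rw [lsub_yy, bm_val]; simp

theorem bm_Xq (p : Fˣ × Fˣ × F) : lsub (bm p : Matrix (Fin 2) (Fin 2) F) (Xq F) =
    MvPolynomial.C (p.1 : F) * Xq F := by
  have h : (MvPolynomial.C (p.2.1 : F) : MM) ^ (qq - 1) = 1 := by
    rw [← map_pow, unit_pow_card, map_one]
  have h2 : yy ^ qq = yy * yy ^ (qq - 1) := by
    rw [← pow_succ', Nat.sub_add_cancel (by have := two_le_card (F := F); omega)]
  rw [Xq, map_sub, map_mul, map_pow, map_pow, bm_xx, bm_yy, frob_add, mul_pow, mul_pow, mul_pow,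
    frob_C, frob_C, h, h2]
  ring

/-- Borel invariance -/
def BInv (h : MM) : Prop := ∀ p : Fˣ × Fˣ × F, lsub (bm p : Matrix (Fin 2) (Fin 2) F) h = h

theorem bm_mon (p : Fˣ × Fˣ × F) (l k : ℕ) :
    lsub (bm p : Matrix (Fin 2) (Fin 2) F) (yy ^ l * Xq F ^ k) =
      ((p.2.1 : F) ^ l * (p.1 : F) ^ k) • (yy ^ l * Xq F ^ k) := by
  rw [map_mul, map_pow, map_pow, bm_yy, bm_Xq, MvPolynomial.smul_eq_C_mul, map_mul, map_pow,
    map_pow, mul_pow, mul_pow]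
  ring

theorem BInv_mon {l k : ℕ} (hl : qq - 1 ∣ l) (hk : qq - 1 ∣ k) : BInv (yy ^ l * Xq F ^ k) := by
  intro p
  rw [bm_mon, unit_pow_dvd _ hl, unit_pow_dvd _ hk]; simp

theorem sum_lin_pow (a : Fˣ) :
    ∑ c : F, (MvPolynomial.C (a : F) * xx + MvPolynomial.C c * yy) ^ (qq - 1) =
      - yy ^ (qq - 1) := by
  simp_rw [add_pow]
  rw [Finset.sum_comm]
  have key : ∀ m ∈ Finset.range (qq - 1 + 1),
      ∑ c : F, (MvPolynomial.C (a : F) * xx) ^ m * (MvPolynomial.C c * yy) ^ (qq - 1 - m) *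
        ((qq - 1).choose m : MM) = (MvPolynomial.C (a : F) * xx) ^ m * yy ^ (qq - 1 - m) *
        ((qq - 1).choose m : MM) * MvPolynomial.C (∑ c : F, c ^ (qq - 1 - m)) := by
    intro m _
    rw [map_sum, Finset.mul_sum]
    apply Finset.sum_congr rfl
    intro c _
    rw [mul_pow, map_pow]; ring
  rw [Finset.sum_congr rfl key, Finset.sum_eq_single 0]
  · rw [sum_pow_F, if_pos]
    · simp
    · have := two_le_card (F := F)
      simp; omega
  · intro m hm hm0
    rw [sum_pow_F, if_neg]
    · simp
    · rintro ⟨h1, h2⟩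
      have := Nat.le_of_dvd h1 h2
      omega
  · simp

theorem TB_xh {h : MM} (hh : BInv h) : TB (xx ^ (qq - 1) * h) = - (yy ^ (qq - 1) * h) := by
  rw [TB_apply]
  have h1 : ∀ p : Fˣ × Fˣ × F, lsub (bm p : Matrix (Fin 2) (Fin 2) F) (xx ^ (qq - 1) * h) =
      (MvPolynomial.C (p.1 : F) * xx + MvPolynomial.C p.2.2 * yy) ^ (qq - 1) * h := by
    intro p
    rw [map_mul, hh p, map_pow, bm_xx]
  simp_rw [h1]
  rw [← Finset.sum_mul, Fintype.sum_prod_type]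
  simp_rw [Fintype.sum_prod_type]
  simp_rw [sum_lin_pow]
  have h2 : ((qq - 1 : ℕ) : MM) = -1 := by
    rw [← map_natCast (MvPolynomial.C (σ := Fin 2) (R := F)), card_sub_one_cast]; simp
  simp only [Finset.sum_const, Finset.card_univ, Fintype.card_units, nsmul_eq_mul]
  rw [h2]; ring

theorem choose_cast (s : ℕ) (hs : s < qq) : (((qq - 1).choose s : ℕ) : F) = (-1) ^ s := by
  induction s with
  | zero => simp
  | succ s ih =>
    have h := ih (by omega)
    have h2 := Nat.choose_succ_succ (qq - 1) s
    have h3 : (qq - 1).succ = qq := by omega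
    rw [h3] at h2
    obtain ⟨p, hp, n, hpr, hn⟩ := FiniteField.card' F
    have h4 : p ∣ Nat.choose qq s.succ := by
      rw [hn]
      apply hpr.dvd_choose_pow (by simp)
      rw [← hn]; exact hs.ne
    have h5 : ((Nat.choose qq s.succ : ℕ) : F) = 0 := (CharP.cast_eq_zero_iff F p _).2 h4
    rw [h2, Nat.cast_add, h] at h5
    rw [pow_succ]
    linear_combination h5

theorem mon_mem_NB {m l : ℕ} (k : ℕ) (hm : m < qq - 1) (hl : qq - 1 ≤ l) :
    xx ^ m * (yy ^ l * Xq F ^ k) ∈ NB F := by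
  set n := qq - 1 with hn
  set w : MM := yy ^ (l - (n - m)) * Xq F ^ k with hw
  have hmem : ∑ c : F, (c ^ m) • (lsub (bm (1, 1, c) : Matrix (Fin 2) (Fin 2) F) (xx ^ n * w)
      - xx ^ n * w) ∈ NB F := by
    apply Submodule.sum_mem
    intro c _
    exact Submodule.smul_mem _ _ (Submodule.subset_span ⟨_, _, rfl⟩)
  have h1 : ∀ c : F, lsub (bm (1, 1, c) : Matrix (Fin 2) (Fin 2) F) (xx ^ n * w) =
      (MvPolynomial.C c * yy + xx) ^ n * w := by
    intro c
    rw [map_mul, map_pow, bm_xx, hw, bm_mon]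
    simp [add_comm]
  have h2 : ∑ c : F, (c ^ m) • (lsub (bm (1, 1, c) : Matrix (Fin 2) (Fin 2) F) (xx ^ n * w)
      - xx ^ n * w) = (-(-1) ^ (n - m) : F) • (xx ^ m * (yy ^ l * Xq F ^ k)) := by
    simp_rw [h1, smul_sub, MvPolynomial.smul_eq_C_mul]
    rw [Finset.sum_sub_distrib, ← Finset.sum_mul, ← map_sum, sum_pow_F, if_neg (by
      rintro ⟨h1, h2⟩
      have := Nat.le_of_dvd h1 h2
      omega)]
    simp_rw [add_pow]
    have key : ∀ c : F, MvPolynomial.C (c ^ m) * ((∑ j ∈ Finset.range (n + 1),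
        (MvPolynomial.C c * yy) ^ j * xx ^ (n - j) * ((n.choose j : ℕ) : MM)) * w) =
        ∑ j ∈ Finset.range (n + 1), (yy ^ j * xx ^ (n - j) * ((n.choose j : ℕ) : MM) * w) *
          MvPolynomial.C (c ^ (m + j)) := by
      intro c
      rw [Finset.sum_mul, Finset.mul_sum]
      apply Finset.sum_congr rfl
      intro j _
      rw [mul_pow, pow_add, map_mul, map_pow, map_pow]; ring
    simp_rw [key]
    rw [Finset.sum_comm]
    simp_rw [← Finset.mul_sum, ← map_sum, sum_pow_F]
    rw [Finset.sum_eq_single (n - m)]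
    · rw [if_pos ⟨by omega, by rw [← hn]; exact ⟨1, by omega⟩⟩,
        ← map_natCast (MvPolynomial.C (σ := Fin 2) (R := F)), choose_cast _ (by omega), hw]
      have e1 : n - (n - m) = m := by omega
      have e2 : yy ^ l = yy ^ (n - m) * yy ^ (l - (n - m)) := by
        rw [← pow_add]; congr 1; omega
      rw [e1, e2]
      simp
      ring
    · intro j hj hj2
      rw [if_neg]
      · simp
      · rintro ⟨h3, h4⟩
        rw [← hn] at h4
        obtain ⟨t, ht⟩ := h4
        rw [Finset.mem_range] at hj
        have : t < 2 := by
          by_contra hcon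
          have : n * 2 ≤ n * t := Nat.mul_le_mul_left _ (by omega)
          omega
        interval_cases t <;> omega
    · intro h; exfalso; apply h; rw [Finset.mem_range]; omega
  rw [h2] at hmem
  exact (Submodule.smul_mem_iff _ (by simp)).1 hmem

theorem torus_mem_NB {m l k : ℕ} (h : ¬ (qq - 1 ∣ l ∧ qq - 1 ∣ m + k)) :
    xx ^ m * (yy ^ l * Xq F ^ k) ∈ NB F := by
  have h1 : ∀ a d : Fˣ, lsub (bm (a, d, 0) : Matrix (Fin 2) (Fin 2) F)
      (xx ^ m * (yy ^ l * Xq F ^ k)) =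
      ((a : F) ^ (m + k) * (d : F) ^ l) • (xx ^ m * (yy ^ l * Xq F ^ k)) := by
    intro a d
    rw [map_mul, map_pow, bm_xx, bm_mon]
    simp only [MvPolynomial.smul_eq_C_mul, map_mul, map_pow, map_zero, mul_pow, pow_add]
    ring
  have h2 : ∃ a d : Fˣ, (a : F) ^ (m + k) * (d : F) ^ l ≠ 1 := by
    by_cases hl : qq - 1 ∣ l
    · obtain ⟨a, ha⟩ := exists_unit_pow_ne (F := F) (i := m + k) (fun h3 => h ⟨hl, h3⟩)
      exact ⟨a, 1, by simpa using ha⟩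
    · obtain ⟨a, ha⟩ := exists_unit_pow_ne (F := F) hl
      exact ⟨1, a, by simpa using ha⟩
  obtain ⟨a, d, had⟩ := h2
  have h3 : lsub (bm (a, d, 0) : Matrix (Fin 2) (Fin 2) F)
      (xx ^ m * (yy ^ l * Xq F ^ k)) - (xx ^ m * (yy ^ l * Xq F ^ k)) ∈ NB F :=
    Submodule.subset_span ⟨_, _, rfl⟩
  rw [h1] at h3
  have h4 : ((a : F) ^ (m + k) * (d : F) ^ l - 1) • (xx ^ m * (yy ^ l * Xq F ^ k)) ∈ NB F := by
    rw [sub_smul, one_smul]; exact h3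
  exact (Submodule.smul_mem_iff _ (sub_ne_zero.2 had)).1 h4

theorem span_mon (i j k : ℕ) : xx ^ i * (yy ^ j * Xq F ^ k) ∈
    Submodule.span F {w : MM | ∃ m l k, m < qq ∧ w = xx ^ m * (yy ^ l * Xq F ^ k)} := by
  induction i using Nat.strong_induction_on generalizing j k with
  | _ i ih =>
    by_cases hi : i < qq
    · exact Submodule.subset_span ⟨i, j, k, hi, rfl⟩
    · have hq := two_le_card (F := F)
      have e : xx ^ i * (yy ^ j * Xq F ^ k) = xx ^ (i - qq) * (yy ^ j * Xq F ^ (k + 1)) +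
          xx ^ (i - qq + 1) * (yy ^ (j + (qq - 1)) * Xq F ^ k) := by
        have : xx ^ i = xx ^ (i - qq) * (Xq F + xx * yy ^ (qq - 1)) := by
          rw [Xq, sub_add_cancel, ← pow_add, Nat.sub_add_cancel (by omega)]
        rw [this]; ring
      rw [e]
      exact Submodule.add_mem _ (ih _ (by omega) _ _) (ih _ (by omega) _ _)

theorem reduction {f : MM} (hf : yy ∣ f) :
    ∃ h : MM, BInv h ∧ yy ∣ h ∧ f - xx ^ (qq - 1) * h ∈ NB F := by
  obtain ⟨f, rfl⟩ := hf
  have hspan : f ∈ Submodule.span F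
      {w : MM | ∃ m l k, m < qq ∧ w = xx ^ m * (yy ^ l * Xq F ^ k)} := by
    induction f using poly_induction with
    | hadd f g hf hg => exact Submodule.add_mem _ hf hg
    | hsmul a f hf => exact Submodule.smul_mem _ _ hf
    | hm i j => simpa using span_mon (F := F) i j 0
  induction hspan using Submodule.span_induction with
  | zero => exact ⟨0, by intro p; simp, by simp, by simp⟩
  | add f g _ _ hf hg =>
    obtain ⟨h1, a1, b1, c1⟩ := hf
    obtain ⟨h2, a2, b2, c2⟩ := hg
    refine ⟨h1 + h2, ?_, dvd_add b1 b2, ?_⟩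
    · intro p; rw [map_add, a1 p, a2 p]
    · have := Submodule.add_mem _ c1 c2
      convert this using 1; ring
  | smul a f _ hf =>
    obtain ⟨h1, a1, b1, c1⟩ := hf
    refine ⟨a • h1, ?_, ?_, ?_⟩
    · intro p; rw [map_smul, a1 p]
    · rw [MvPolynomial.smul_eq_C_mul]; exact Dvd.dvd.mul_left b1 _
    · have := Submodule.smul_mem _ a c1
      convert this using 1
      rw [smul_sub, mul_smul_comm, mul_smul_comm]
  | mem w hw =>
    obtain ⟨m, l, k, hm, rfl⟩ := hw
    have e : yy * (xx ^ m * (yy ^ l * Xq F ^ k)) = xx ^ m * (yy ^ (l + 1) * Xq F ^ k) := by ring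
    rw [e]
    have hB0 : BInv (0 : MM) := by intro p; simp
    by_cases ht : qq - 1 ∣ l + 1 ∧ qq - 1 ∣ m + k
    · by_cases hm1 : m = qq - 1
      · refine ⟨yy ^ (l + 1) * Xq F ^ k, BInv_mon ht.1 ?_, ?_, ?_⟩
        · have := ht.2
          rw [hm1] at this
          simpa using this
        · exact Dvd.dvd.mul_right (dvd_pow_self _ (by omega)) _
        · rw [hm1, sub_self]; exact Submodule.zero_mem _
      · exact ⟨0, hB0, by simp, by
          simpa using mon_mem_NB k (by omega) (Nat.le_of_dvd (by omega) ht.1)⟩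
    · exact ⟨0, hB0, by simp, by simpa using torus_mem_NB ht⟩

/-! ### The evaluation functional, and the key reduction -/

/-- Sum of the values at all nonzero points. -/
noncomputable def EE : MM →ₗ[F] F :=
  ∑ v : Fin 2 → F, (MvPolynomial.aeval v : MM →ₐ[F] F).toLinearMap
    - (MvPolynomial.aeval (0 : Fin 2 → F) : MM →ₐ[F] F).toLinearMap

theorem EE_apply (f : MM) : EE f = ∑ v : Fin 2 → F, MvPolynomial.aeval v f
    - MvPolynomial.aeval (0 : Fin 2 → F) f := by
  simp [EE, LinearMap.sum_apply]

theorem EE_lsub (g : GL (Fin 2) F) (f : MM) :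
    EE (lsub (g : Matrix (Fin 2) (Fin 2) F) f) = EE f := by
  rw [EE_apply, EE_apply]
  simp_rw [eval_lsub]
  rw [Matrix.mulVec_zero]
  congr 1
  refine Fintype.sum_bijective (fun v => (g : Matrix (Fin 2) (Fin 2) F).mulVec v) ?_ _ _
    (fun _ => rfl)
  apply Function.Injective.bijective_of_finite
  intro v w h
  have := congrArg (fun z => ((g⁻¹ : GL (Fin 2) F) : Matrix (Fin 2) (Fin 2) F).mulVec z) h
  simpa only [Matrix.mulVec_mulVec, ← Units.val_mul, inv_mul_cancel, Units.val_one,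
    Matrix.one_mulVec] using this

theorem EE_NG {f : MM} (hf : f ∈ NG F) : EE f = 0 := by
  have : NG F ≤ LinearMap.ker (EE (F := F)) := by
    rw [NG, Submodule.span_le]
    rintro _ ⟨p, f, rfl⟩
    simp [EE_lsub]
  exact this hf

theorem sum_split (φ : F → F) : ∑ a : F, φ a = φ 0 + ∑ a : Fˣ, φ a := by
  rw [Fintype.sum_eq_add_sum_compl (0 : F) φ]
  congr 1
  symm
  refine Finset.sum_bij (fun a _ => (a : F)) ?_ ?_ ?_ ?_
  · simp
  · intro a _ b _ h; exact Units.ext h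
  · intro b hb; exact ⟨Units.mk0 b (by simpa using hb), by simp⟩
  · simp

theorem sum_vec (φ : (Fin 2 → F) → F) : ∑ v : Fin 2 → F, φ v = ∑ b : F, ∑ a : F, φ ![a, b] := by
  rw [Finset.sum_comm, ← Fintype.sum_prod_type']
  exact Fintype.sum_equiv (finTwoArrowEquiv F) _ _ (fun v => by
    congr 1; ext i; fin_cases i <;> simp)

theorem EE_reps {f : MM} {d : ℕ} (hf : f.IsHomogeneous d) (hd : qq - 1 ∣ d) :
    EE f = - MvPolynomial.aeval (![1, 0] : Fin 2 → F)
      (∑ r : Option F, lsub (rm r : Matrix (Fin 2) (Fin 2) F) f) := by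
  have h1 : ∀ b : Fˣ, ∑ a : F, MvPolynomial.aeval ![a, (b : F)] f =
      ∑ s : F, MvPolynomial.aeval ![s, 1] f := by
    intro b
    symm
    refine Fintype.sum_bijective (fun s => (b : F) * s) (mulLeft_bijective₀ _ b.ne_zero) _ _ ?_
    intro s
    have : ![(b : F) * s, (b : F)] = (b : F) • ![s, 1] := by simp
    rw [this, eval_smul_hom hf, unit_pow_dvd _ hd, one_mul]
  have h2 : ∀ b : Fˣ, MvPolynomial.aeval ![(b : F), 0] f = MvPolynomial.aeval ![(1 : F), 0] f := by
    intro b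
    have : ![(b : F), 0] = (b : F) • ![(1 : F), 0] := by simp
    rw [this, eval_smul_hom hf, unit_pow_dvd _ hd, one_mul]
  have h0 : (![0, 0] : Fin 2 → F) = 0 := by ext i; fin_cases i <;> simp
  have h3 : ∀ s : F, (!![s, 1; 1, 0] : Matrix (Fin 2) (Fin 2) F).mulVec ![1, 0] = ![s, 1] := by
    intro s; ext i; fin_cases i <;> simp
  rw [EE_apply, sum_vec, sum_split, sum_split]
  simp_rw [h1, h2]
  rw [map_sum, Fintype.sum_option]
  simp_rw [eval_lsub, rm_val_some, h3]
  simp only [h0, rm, Units.val_one, Matrix.one_mulVec, Finset.sum_const, Finset.card_univ,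
    Fintype.card_units, nsmul_eq_mul, card_sub_one_cast]
  ring

theorem coeff_diag (a d : Fˣ) (f : MM) (u : Fin 2 →₀ ℕ) :
    MvPolynomial.coeff u (lsub (bm (a, d, 0) : Matrix (Fin 2) (Fin 2) F) f) =
      (a : F) ^ (u 0) * (d : F) ^ (u 1) * MvPolynomial.coeff u f := by
  induction f using poly_induction with
  | hadd f g hf hg => rw [map_add, MvPolynomial.coeff_add, hf, hg, MvPolynomial.coeff_add]; ring
  | hsmul c f hf => rw [map_smul, MvPolynomial.coeff_smul, hf, MvPolynomial.coeff_smul,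
      smul_eq_mul, smul_eq_mul]; ring
  | hm i j =>
    have : lsub (bm (a, d, 0) : Matrix (Fin 2) (Fin 2) F) (xx ^ i * yy ^ j) =
        ((a : F) ^ i * (d : F) ^ j) • (xx ^ i * yy ^ j) := by
      rw [map_mul, map_pow, map_pow, bm_xx, bm_yy, MvPolynomial.smul_eq_C_mul]
      simp only [map_zero, zero_mul, add_zero, mul_pow, map_mul, map_pow]
      ring
    rw [this, MvPolynomial.coeff_smul, coeff_xy]
    split_ifs with h
    · rw [h.1, h.2]; simp
    · simp

theorem hom_deg {f : MM} {d : ℕ} (hf : f.IsHomogeneous d) {u : Fin 2 →₀ ℕ}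
    (hu : MvPolynomial.coeff u f ≠ 0) : u 0 + u 1 = d := by
  have h := hf.degree_eq_sum_deg_support (MvPolynomial.mem_support_iff.2 hu)
  have := Finsupp.sum_fintype u (fun i n => n) (by simp)
  rw [Finsupp.sum] at this
  rw [h, this, Fin.sum_univ_two]

theorem lsub_scalar {f : MM} {d : ℕ} (hf : f.IsHomogeneous d) (a : Fˣ) :
    lsub (bm (a, a, 0) : Matrix (Fin 2) (Fin 2) F) f = (a : F) ^ d • f := by
  ext u
  rw [coeff_diag, MvPolynomial.coeff_smul, smul_eq_mul]
  by_cases hu : MvPolynomial.coeff u f = 0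
  · simp [hu]
  · rw [← hom_deg hf hu, pow_add]

theorem mem_NG_of_not_dvd {f : MM} {d : ℕ} (hf : f.IsHomogeneous d) (hd : ¬ qq - 1 ∣ d) :
    f ∈ NG F := by
  obtain ⟨a, ha⟩ := exists_unit_pow_ne (F := F) hd
  have h3 : lsub (bm (a, a, 0) : Matrix (Fin 2) (Fin 2) F) f - f ∈ NG F :=
    Submodule.subset_span ⟨_, _, rfl⟩
  rw [lsub_scalar hf] at h3
  have h4 : ((a : F) ^ d - 1) • f ∈ NG F := by
    rw [sub_smul, one_smul]; exact h3
  exact (Submodule.smul_mem_iff _ (sub_ne_zero.2 ha)).1 h4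

theorem key_reduction {f : MM} {d : ℕ} (hf : f.IsHomogeneous d) (hE : EE f = 0) :
    ∃ h : MM, BInv h ∧ yy ∣ h ∧ f - xx ^ (qq - 1) * h ∈ NG F ∧ TG f = - (yy ^ (qq - 1) * h) := by
  by_cases hd : qq - 1 ∣ d
  · have h1 := EE_reps hf hd
    set f' := ∑ r : Option F, lsub (rm r : Matrix (Fin 2) (Fin 2) F) f with hf'
    have hf'h : f'.IsHomogeneous d := by
      apply MvPolynomial.IsHomogeneous.sum
      intro r _
      exact lsub_hom _ hf
    rw [hE] at h1
    have h2 := yy_dvd_of_eval hf'h (by simpa using h1.symm)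
    obtain ⟨h, hB, hy, hN⟩ := reduction h2
    have h3 : f' - f ∈ NG F := by
      have : ∑ r : Option F, (lsub (rm r : Matrix (Fin 2) (Fin 2) F) f - f) ∈ NG F :=
        Submodule.sum_mem _ (fun r _ => Submodule.subset_span ⟨_, _, rfl⟩)
      rw [Finset.sum_sub_distrib, ← hf'] at this
      have h2 : ((qq : ℕ) : MM) = 0 := by
        rw [← map_natCast (MvPolynomial.C (σ := Fin 2) (R := F)), FiniteField.cast_card_eq_zero,
          map_zero]
      simpa [Finset.sum_const, Finset.card_univ, Fintype.card_option, nsmul_eq_mul, h2] using this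
    refine ⟨h, hB, hy, ?_, ?_⟩
    · have := Submodule.sub_mem _ (NB_le hN) h3
      convert this using 1; ring
    · have h4 := TB_NB hN
      rw [map_sub, TB_xh hB, sub_eq_zero] at h4
      rw [TG_eq_TB, h4]
  · have h1 := mem_NG_of_not_dvd hf hd
    refine ⟨0, ?_, by simp, by simpa using h1, by simpa using TG_NG h1⟩
    intro p; simp

theorem mem_NG_iff {f : MM} {d : ℕ} (hf : f.IsHomogeneous d) :
    f ∈ NG F ↔ EE f = 0 ∧ TG f = 0 := by
  constructor
  · intro h; exact ⟨EE_NG h, TG_NG h⟩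
  · rintro ⟨h1, h2⟩
    obtain ⟨h, -, -, h3, h4⟩ := key_reduction hf h1
    rw [h2] at h4
    have : h = 0 := by
      have h5 : yy ^ (qq - 1) * h = 0 := by simpa using h4.symm
      exact (mul_eq_zero.1 h5).resolve_left (pow_ne_zero _ (MvPolynomial.X_ne_zero _))
    simpa [this] using h3

/-! ### Dickson invariants and divisibility -/

/-- Invariance under the whole group -/
def GInv (h : MM) : Prop := ∀ g : GL (Fin 2) F, lsub (g : Matrix (Fin 2) (Fin 2) F) h = h

theorem fld1 {K : Type} [Field K] {y : K} (hy : y ≠ 0) (x a : K) :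
    x - a * y = y * (x / y - a) := by
  field_simp

theorem fld2 {K : Type} [Field K] {y : K} (hy : y ≠ 0) (x a b : K) :
    a - x * b = a - y * b * (x / y) := by
  field_simp

theorem Xq_prod : Xq F = ∏ a : F, (xx - MvPolynomial.C a * yy) := by
  let K := FractionRing MM
  have hP : (∏ a : F, (Polynomial.X - Polynomial.C a)) =
      (Polynomial.X ^ qq - Polynomial.X : Polynomial F) := by
    have h1 : (Polynomial.X ^ qq - Polynomial.X : Polynomial F).roots = Finset.univ.val :=
      FiniteField.roots_X_pow_card_sub_X F
    have hmonic : (Polynomial.X ^ qq - Polynomial.X : Polynomial F).Monic := by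
      apply Polynomial.monic_X_pow_sub
      rw [Polynomial.degree_X]
      exact_mod_cast two_le_card (F := F)
    have := Polynomial.prod_multiset_X_sub_C_of_monic_of_roots_card_eq hmonic (by
      rw [h1, FiniteField.X_pow_card_sub_X_natDegree_eq F (two_le_card (F := F))]
      rfl)
    rw [h1] at this
    exact this
  apply IsFractionRing.injective MM K
  set X' : K := algebraMap MM K xx with hX
  set Y' : K := algebraMap MM K yy with hY
  have hY0 : Y' ≠ 0 := by
    rw [hY, Ne, IsFractionRing.to_map_eq_zero_iff]
    exact MvPolynomial.X_ne_zero _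
  have hq : Y' ^ qq = Y' * Y' ^ (qq - 1) := by
    rw [← pow_succ', Nat.sub_add_cancel (by have := two_le_card (F := F); omega)]
  have h2 := congrArg (Polynomial.eval₂ ((algebraMap MM K).comp MvPolynomial.C) (X' / Y')) hP
  rw [Polynomial.eval₂_finsetProd] at h2
  simp only [Polynomial.eval₂_sub, Polynomial.eval₂_X, Polynomial.eval₂_C,
    Polynomial.eval₂_X_pow, RingHom.comp_apply] at h2
  have h3 : ∀ a : F, algebraMap MM K (xx - MvPolynomial.C a * yy) =
      Y' * (X' / Y' - algebraMap MM K (MvPolynomial.C a)) := by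
    intro a
    rw [map_sub, map_mul, ← hX, ← hY]
    exact fld1 hY0 _ _
  rw [map_prod]
  simp_rw [h3]
  rw [Finset.prod_mul_distrib, h2, Finset.prod_const, Finset.card_univ, Xq, map_sub, map_mul,
    map_pow, map_pow, ← hX, ← hY, mul_sub, div_pow]
  rw [mul_div_cancel₀ _ (pow_ne_zero _ hY0), hq]
  exact fld2 hY0 _ _ _

/-- An element with second row `(1, -a)`. -/
noncomputable def lm (a : F) : GL (Fin 2) F :=
  Matrix.GeneralLinearGroup.mkOfDetNeZero !![0, 1; 1, -a] (by simp [Matrix.det_fin_two])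

theorem lm_yy (a : F) : lsub (lm a : Matrix (Fin 2) (Fin 2) F) yy =
    xx - MvPolynomial.C a * yy := by
  have : (lm a : Matrix (Fin 2) (Fin 2) F) = !![0, 1; 1, -a] := rfl
  rw [lsub_yy, this]; simp; ring

theorem irr_lin (a : F) : Irreducible (xx - MvPolynomial.C a * yy) := by
  rw [← lm_yy]
  let e : MM ≃ₐ[F] MM := AlgEquiv.ofAlgHom (lsub (lm a : Matrix (Fin 2) (Fin 2) F))
    (lsub ((lm a)⁻¹ : GL (Fin 2) F).1)
    (by ext1 i; simp only [AlgHom.comp_apply, lsub_comp, ← Units.val_mul]; simp [lsub_one])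
    (by ext1 i; simp only [AlgHom.comp_apply, lsub_comp, ← Units.val_mul]; simp [lsub_one])
  have : Irreducible (e yy) := (MulEquiv.irreducible_iff e).2 (MvPolynomial.X_prime).irreducible
  exact this

theorem lin_relprime {a b : F} (h : a ≠ b) :
    IsRelPrime (xx - MvPolynomial.C a * yy) (xx - MvPolynomial.C b * yy) := by
  rw [(irr_lin a).isRelPrime_iff_not_dvd]
  rintro ⟨k, hk⟩
  have := congrArg (MvPolynomial.aeval (![a, 1] : Fin 2 → F)) hk
  simp at this
  exact h (sub_eq_zero.1 this)

theorem y_lin_relprime (b : F) :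
    IsRelPrime yy (xx - MvPolynomial.C b * yy) := by
  rw [(MvPolynomial.X_prime (R := F) (i := (1 : Fin 2))).irreducible.isRelPrime_iff_not_dvd]
  intro h
  have := eval_of_yy_dvd h
  simp at this

theorem Xq_pow_dvd {P : MM} {n : ℕ} (h : ∀ a : F, (xx - MvPolynomial.C a * yy) ^ n ∣ P) :
    Xq F ^ n ∣ P := by
  rw [Xq_prod, ← Finset.prod_pow]
  apply Fintype.prod_dvd_of_isRelPrime
  · intro a b hab
    exact (lin_relprime hab).pow
  · exact h

theorem L_pow_dvd {P : MM} (hP : GInv P) {n : ℕ} (h : yy ^ n ∣ P) : (yy * Xq F) ^ n ∣ P := by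
  rw [mul_pow]
  apply IsRelPrime.mul_dvd
  · rw [Xq_prod]
    apply IsRelPrime.pow
    apply IsRelPrime.prod_right
    intro a _
    exact y_lin_relprime a
  · exact h
  · apply Xq_pow_dvd
    intro a
    have := map_dvd (lsub (lm a : Matrix (Fin 2) (Fin 2) F)) h
    rwa [hP, map_pow, lm_yy] at this

theorem yy_pow_improve {P : MM} (hP : BInv P) {n : ℕ} (h : yy ^ ((qq - 1) * n + 1) ∣ P) :
    yy ^ ((qq - 1) * (n + 1)) ∣ P := by
  rw [yy_pow_dvd_iff] at h ⊢
  intro u hu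
  have h1 := h u hu
  have h2 : qq - 1 ∣ u 1 := by
    by_contra hcon
    obtain ⟨d, hd⟩ := exists_unit_pow_ne (F := F) hcon
    have := coeff_diag 1 d P u
    rw [hP] at this
    apply hd
    have h3 : ((d : F) ^ u 1 - 1) * MvPolynomial.coeff u P = 0 := by
      simp at this
      rw [sub_mul, ← this]; ring
    exact sub_eq_zero.1 ((mul_eq_zero.1 h3).resolve_right hu)
  obtain ⟨t, ht⟩ := h2
  rw [ht] at h1 ⊢
  apply Nat.mul_le_mul_left
  by_contra hcon
  have : (qq - 1) * t ≤ (qq - 1) * n := Nat.mul_le_mul_left _ (by omega)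
  omega

theorem GInv.BInv {P : MM} (hP : GInv P) : BInv P := fun p => hP (bm p)

/-- The first Dickson invariant. -/
noncomputable def D0 (F : Type) [Field F] [Fintype F] : MvPolynomial (Fin 2) F :=
  (MvPolynomial.X 1 * Xq F) ^ (Fintype.card F - 1)

theorem D0_pow_dvd {P : MM} (hP : GInv P) {n : ℕ} (h : yy ^ ((qq - 1) * n + 1) ∣ P) :
    D0 F ^ (n + 1) ∣ P := by
  rw [D0, ← pow_mul]
  exact L_pow_dvd hP (yy_pow_improve hP.BInv h)

theorem Xq_hom : (Xq F).IsHomogeneous qq := by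
  apply MvPolynomial.IsHomogeneous.sub
  · exact MvPolynomial.isHomogeneous_X_pow _ _
  · have := (MvPolynomial.isHomogeneous_X F (0 : Fin 2)).mul
      (MvPolynomial.isHomogeneous_X_pow (R := F) (1 : Fin 2) (qq - 1))
    rwa [show 1 + (qq - 1) = qq by have := two_le_card (F := F); omega] at this

theorem Xq_ne : Xq F ≠ 0 := by
  rw [Xq_prod, Finset.prod_ne_zero_iff]
  intro a _
  exact (irr_lin a).ne_zero

theorem L_ne : yy * Xq F ≠ 0 := mul_ne_zero (MvPolynomial.X_ne_zero _) Xq_ne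

theorem D0_ne : D0 F ≠ 0 := pow_ne_zero _ L_ne

theorem D0_hom : (D0 F).IsHomogeneous (qq ^ 2 - 1) := by
  have := ((MvPolynomial.isHomogeneous_X F (1 : Fin 2)).mul Xq_hom).pow (qq - 1)
  rwa [show (1 + qq) * (qq - 1) = qq ^ 2 - 1 by
    rw [add_comm, ← Nat.sq_sub_sq, one_pow]] at this

theorem L_eq : yy * Xq F = xx ^ qq * yy - xx * yy ^ qq := by
  have hq : yy ^ qq = yy * yy ^ (qq - 1) := by
    rw [← pow_succ', Nat.sub_add_cancel (by have := two_le_card (F := F); omega)]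
  rw [Xq, hq]; ring

theorem frob_C' (a : F) (n : ℕ) : (MvPolynomial.C a : MM) ^ (qq ^ n) = MvPolynomial.C a := by
  rw [← map_pow, FiniteField.pow_card_pow]

theorem frob_add' (f g : MM) : (f + g) ^ (qq ^ 2) = f ^ (qq ^ 2) + g ^ (qq ^ 2) := by
  rw [pow_two, pow_mul, frob_add, frob_add, pow_mul, pow_mul]

theorem lsub_L (g : Matrix (Fin 2) (Fin 2) F) :
    lsub g (yy * Xq F) = MvPolynomial.C g.det * (yy * Xq F) := by
  rw [L_eq, map_sub, map_mul, map_mul, map_pow, map_pow, lsub_xx, lsub_yy, frob_add, frob_add,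
    mul_pow, mul_pow, mul_pow, mul_pow]
  simp only [frob_C, Matrix.det_fin_two, map_sub, map_mul]
  ring

theorem lsub_L2 (g : Matrix (Fin 2) (Fin 2) F) :
    lsub g (xx ^ (qq ^ 2) * yy - xx * yy ^ (qq ^ 2)) =
      MvPolynomial.C g.det * (xx ^ (qq ^ 2) * yy - xx * yy ^ (qq ^ 2)) := by
  rw [map_sub, map_mul, map_mul, map_pow, map_pow, lsub_xx, lsub_yy, frob_add', frob_add',
    mul_pow, mul_pow, mul_pow, mul_pow]
  simp only [frob_C', Matrix.det_fin_two, map_sub, map_mul]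
  ring

theorem det_ne (g : GL (Fin 2) F) : (g : Matrix (Fin 2) (Fin 2) F).det ≠ 0 :=
  ((Matrix.isUnit_iff_isUnit_det _).1 g.isUnit).ne_zero

theorem D0_inv : GInv (D0 F) := by
  intro g
  rw [D0, map_pow, lsub_L, mul_pow, ← map_pow,
    FiniteField.pow_card_sub_one_eq_one _ (det_ne g), map_one, one_mul]

/-- The second Dickson invariant. -/
noncomputable def D1 (F : Type) [Field F] [Fintype F] : MvPolynomial (Fin 2) F :=
  ∑ i ∈ Finset.range (Fintype.card F + 1), (MvPolynomial.X 0 ^ (Fintype.card F - 1)) ^ i *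
    (MvPolynomial.X 1 ^ (Fintype.card F - 1)) ^ (Fintype.card F + 1 - 1 - i)

theorem D1_mul : D1 F * (yy * Xq F) = xx ^ (qq ^ 2) * yy - xx * yy ^ (qq ^ 2) := by
  have h := geom_sum₂_mul (xx ^ (qq - 1)) (yy ^ (qq - 1)) (qq + 1)
  have hq : ∀ z : MM, z ^ qq = z * z ^ (qq - 1) := by
    intro z
    rw [← pow_succ', Nat.sub_add_cancel (by have := two_le_card (F := F); omega)]
  have hq2 : ∀ z : MM, z ^ (qq ^ 2) = z * (z ^ (qq - 1)) ^ (qq + 1) := by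
    intro z
    rw [← pow_mul, ← pow_succ']
    congr 1
    rw [mul_comm, ← Nat.sq_sub_sq, one_pow, Nat.sub_add_cancel]
    exact Nat.one_le_pow _ _ (by have := two_le_card (F := F); omega)
  rw [L_eq, hq xx, hq yy, hq2 xx, hq2 yy, D1]
  linear_combination (xx * yy) * h

theorem D1_inv : GInv (D1 F) := by
  intro g
  have h := congrArg (lsub (g : Matrix (Fin 2) (Fin 2) F)) (D1_mul (F := F))
  rw [map_mul, lsub_L, lsub_L2, ← D1_mul] at h
  have h0 : (MvPolynomial.C (g : Matrix (Fin 2) (Fin 2) F).det : MM) * (yy * Xq F) ≠ 0 :=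
    mul_ne_zero (by simpa using det_ne g) L_ne
  apply mul_right_cancel₀ h0
  rw [h]; ring

theorem D1_hom : (D1 F).IsHomogeneous (qq ^ 2 - qq) := by
  apply MvPolynomial.IsHomogeneous.sum
  intro i hi
  rw [Finset.mem_range] at hi
  have := ((MvPolynomial.isHomogeneous_X_pow (R := F) (0 : Fin 2) (qq - 1)).pow i).mul
    ((MvPolynomial.isHomogeneous_X_pow (R := F) (1 : Fin 2) (qq - 1)).pow (qq + 1 - 1 - i))
  rwa [← mul_add, show i + (qq + 1 - 1 - i) = qq by omega, Nat.sub_mul, one_mul, ← pow_two] at this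

theorem D1_eval : MvPolynomial.aeval (![1, 0] : Fin 2 → F) (D1 F) = 1 := by
  have := two_le_card (F := F)
  rw [D1, map_sum, Finset.sum_eq_single qq]
  · simp
  · intro i hi hne
    rw [Finset.mem_range] at hi
    have : qq - 1 ≠ 0 := by omega
    have : qq - i ≠ 0 := by omega
    simp [*]
  · simp

theorem Xq_eval : MvPolynomial.aeval (![1, 0] : Fin 2 → F) (Xq F) = 1 := by
  have := two_le_card (F := F)
  have : qq - 1 ≠ 0 := by omega
  simp [Xq, this]

theorem D0_eval (v : Fin 2 → F) : MvPolynomial.aeval v (D0 F) = 0 := by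
  have := two_le_card (F := F)
  have : qq - 1 ≠ 0 := by omega
  rw [D0, L_eq, map_pow, map_sub, map_mul, map_mul, map_pow, map_pow, MvPolynomial.aeval_X,
    MvPolynomial.aeval_X, FiniteField.pow_card, FiniteField.pow_card, sub_self, zero_pow this]

theorem TG_mul_inv {h : MM} (hh : GInv h) (f : MM) : TG (f * h) = TG f * h := by
  rw [TG_apply, TG_apply, Finset.sum_mul]
  apply Finset.sum_congr rfl
  intro g _
  rw [map_mul, hh g]

theorem TG_f0 : TG (xx ^ (qq - 1) * Xq F ^ (qq - 1)) = - D0 F := by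
  have hB : BInv (Xq F ^ (qq - 1)) := by
    simpa using BInv_mon (F := F) (l := 0) (dvd_zero _) (dvd_refl (qq - 1))
  rw [TG_eq_TB', TB_xh hB, ← mul_pow, ← D0]
  have h1 : ∀ r : Option F, lsub ((rm r)⁻¹ : GL (Fin 2) F).1 (-D0 F)
      = -D0 F := fun r => by rw [map_neg, D0_inv]
  simp_rw [h1]
  have h2 : ((qq : ℕ) : MM) = 0 := by
    rw [← map_natCast (MvPolynomial.C (σ := Fin 2) (R := F)), FiniteField.cast_card_eq_zero,
      map_zero]
  simp [Finset.sum_const, Finset.card_univ, Fintype.card_option, nsmul_eq_mul, h2]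

theorem GInv_of_mul {L k : MM} (hL : GInv L) (hL0 : L ≠ 0) (h : GInv (L * k)) : GInv k := by
  intro g
  have := h g
  rw [map_mul, hL g] at this
  exact mul_left_cancel₀ hL0 this

theorem GInv.mul {f h : MM} (hf : GInv f) (hh : GInv h) : GInv (f * h) := by
  intro g; rw [map_mul, hf g, hh g]

theorem GInv.pow {f : MM} (hf : GInv f) (n : ℕ) : GInv (f ^ n) := by
  intro g; rw [map_pow, hf g]

/-! ### Dimension of the invariants -/

theorem xx_dvd_of_eval {f : MM} {d : ℕ} (hf : f.IsHomogeneous d)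
    (h : MvPolynomial.aeval (![0, 1] : Fin 2 → F) f = 0) : xx ∣ f := by
  have hv : (lm (0 : F) : Matrix (Fin 2) (Fin 2) F) = !![0, 1; 1, -0] := rfl
  have h1 : yy ∣ lsub (lm (0 : F) : Matrix (Fin 2) (Fin 2) F) f := by
    apply yy_dvd_of_eval (lsub_hom _ hf)
    rw [eval_lsub, hv]
    convert h using 3
    ext i; fin_cases i <;> simp
  have h2 := map_dvd (lsub (lm (0 : F) : Matrix (Fin 2) (Fin 2) F)) h1
  rw [lm_yy, lsub_comp, hv] at h2
  have h3 : (!![0, 1; 1, -0] : Matrix (Fin 2) (Fin 2) F) * !![0, 1; 1, -0] = 1 := by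
    rw [Matrix.mul_fin_two, Matrix.one_fin_two]; simp
  rw [h3, lsub_one] at h2
  simpa using h2

theorem card_dvd_of_U (e : ℕ) : ∀ f : MM, f.IsHomogeneous e →
    (∀ c : F, lsub (bm (1, 1, c) : Matrix (Fin 2) (Fin 2) F) f = f) →
    MvPolynomial.aeval (![1, 0] : Fin 2 → F) f ≠ 0 → qq ∣ e := by
  induction e using Nat.strong_induction_on with
  | _ e ih =>
  intro f hf hU h0
  rcases Nat.eq_zero_or_pos e with rfl | he
  · exact dvd_zero _
  have h2 := two_le_card (F := F)
  set c0 := MvPolynomial.aeval (![0, 1] : Fin 2 → F) f with hc0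
  set g : MM := f - MvPolynomial.C c0 * yy ^ e with hg
  have hgh : g.IsHomogeneous e := by
    apply hf.sub
    have := (MvPolynomial.isHomogeneous_C (Fin 2) c0).mul
      (MvPolynomial.isHomogeneous_X_pow (R := F) (1 : Fin 2) e)
    rwa [zero_add] at this
  have hgU : ∀ c : F, lsub (bm (1, 1, c) : Matrix (Fin 2) (Fin 2) F) g = g := by
    intro c
    rw [hg, map_sub, hU, map_mul, map_pow, bm_yy, lsub_C]
    simp
  have hx : xx ∣ g := by
    apply xx_dvd_of_eval hgh
    rw [hg, map_sub, ← hc0]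
    simp
  have hXq : Xq F ^ 1 ∣ g := by
    apply Xq_pow_dvd
    intro a
    have := map_dvd (lsub (bm (1, 1, -a) : Matrix (Fin 2) (Fin 2) F)) hx
    rw [hgU, bm_xx] at this
    simpa [sub_eq_add_neg] using this
  have hge : MvPolynomial.aeval (![1, 0] : Fin 2 → F) g ≠ 0 := by
    rw [hg, map_sub]
    simpa [he.ne'] using h0
  rw [pow_one] at hXq
  obtain ⟨k, hk⟩ := hXq
  rw [hk] at hgh hge hgU
  rw [map_mul, Xq_eval, one_mul] at hge
  rcases hom_factor Xq_hom Xq_ne hgh with hk0 | ⟨hle, hkh⟩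
  · rw [hk0, map_zero] at hge; exact absurd rfl hge
  have hkU : ∀ c : F, lsub (bm (1, 1, c) : Matrix (Fin 2) (Fin 2) F) k = k := by
    intro c
    have := hgU c
    rw [map_mul, bm_Xq] at this
    simp only [Units.val_one, map_one, one_mul] at this
    exact mul_left_cancel₀ Xq_ne this
  have := ih (e - qq) (by omega) k hkh hkU hge
  have h3 := Nat.dvd_add this (dvd_refl qq)
  rwa [Nat.sub_add_cancel hle] at h3

theorem GInv.dvd_of_ne {f : MM} (hf : GInv f) {e : ℕ} (hh : f.IsHomogeneous e)
    (h0 : MvPolynomial.aeval (![1, 0] : Fin 2 → F) f ≠ 0) : qq ^ 2 - qq ∣ e := by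
  have h2 := two_le_card (F := F)
  have h1 : qq ∣ e := card_dvd_of_U e f hh (fun c => hf _) h0
  have h3 : qq - 1 ∣ e := by
    by_contra hcon
    obtain ⟨a, ha⟩ := exists_unit_pow_ne (F := F) hcon
    have h4 := lsub_scalar hh a
    rw [hf] at h4
    have h5 := congrArg (MvPolynomial.aeval (![1, 0] : Fin 2 → F)) h4
    rw [map_smul, smul_eq_mul] at h5
    apply ha
    have h6 : ((a : F) ^ e - 1) * MvPolynomial.aeval (![1, 0] : Fin 2 → F) f = 0 := by
      rw [sub_mul, ← h5, one_mul, sub_self]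
    exact sub_eq_zero.1 ((mul_eq_zero.1 h6).resolve_right h0)
  have h7 : qq ^ 2 - qq = qq * (qq - 1) := by rw [Nat.mul_sub, mul_one, pow_two]
  rw [h7]
  apply Nat.Coprime.mul_dvd_of_dvd_of_dvd _ h1 h3
  obtain ⟨m, hm⟩ : ∃ m, qq = m + 1 := ⟨qq - 1, by omega⟩
  rw [hm]; simp

/-- Homogeneous invariants of degree `e`. -/
def Inv (F : Type) [Field F] [Fintype F] [DecidableEq F] (e : ℕ) :
    Submodule F (MvPolynomial (Fin 2) F) where
  carrier := {f | f.IsHomogeneous e ∧ GInv f}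
  add_mem' := by
    rintro f g ⟨h1, h2⟩ ⟨h3, h4⟩
    exact ⟨h1.add h3, fun p => by rw [map_add, h2 p, h4 p]⟩
  zero_mem' := ⟨MvPolynomial.isHomogeneous_zero _ _ _, fun p => map_zero _⟩
  smul_mem' := by
    rintro c f ⟨h1, h2⟩
    exact ⟨(MvPolynomial.homogeneousSubmodule (Fin 2) F e).smul_mem c h1,
      fun p => by rw [map_smul, h2 p]⟩

theorem mem_Inv {e : ℕ} {f : MM} : f ∈ Inv F e ↔ f.IsHomogeneous e ∧ GInv f := Iff.rfl

instance fin_hom (e : ℕ) : FiniteDimensional F (MvPolynomial.homogeneousSubmodule (Fin 2) F e) :=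
  Module.Finite.iff_fg.2 (MvPolynomial.homogeneousSubmodule_fg (Fin 2) F e)

theorem Inv_le (e : ℕ) : Inv F e ≤ MvPolynomial.homogeneousSubmodule (Fin 2) F e := fun _ h => h.1

instance fin_Inv (e : ℕ) : FiniteDimensional F (Inv F e) :=
  Submodule.finiteDimensional_of_le (Inv_le e)

/-- Multiplication by `D0 ^ n` as a linear map. -/
noncomputable def mD (F : Type) [Field F] [Fintype F] (n : ℕ) :
    MvPolynomial (Fin 2) F →ₗ[F] MvPolynomial (Fin 2) F :=
  LinearMap.mulLeft F (D0 F ^ n)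

theorem mD_apply (n : ℕ) (f : MM) : mD F n f = D0 F ^ n * f := rfl

theorem mD_inj (n : ℕ) : Function.Injective (mD F n) := by
  intro f g h
  exact mul_left_cancel₀ (pow_ne_zero n D0_ne) h

/-- The invariants divisible by `yy ^ ((qq-1) n + 1)`. -/
theorem Inv_dvd {e n : ℕ} {f : MM} (hf : f ∈ Inv F e) (hy : yy ^ ((qq - 1) * n + 1) ∣ f) :
    f = 0 ∨ ((n + 1) * (qq ^ 2 - 1) ≤ e ∧
      f ∈ (Inv F (e - (n + 1) * (qq ^ 2 - 1))).map (mD F (n + 1))) := by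
  obtain ⟨k, hk⟩ := D0_pow_dvd hf.2 hy
  obtain ⟨h1, h2⟩ := hf
  rw [hk] at h1 h2
  rcases hom_factor (D0_hom.pow (n + 1)) (pow_ne_zero _ D0_ne) h1 with hk0 | ⟨hle, hkh⟩
  · left; rw [hk, hk0, mul_zero]
  · right
    rw [mul_comm] at hle hkh
    refine ⟨hle, k, ⟨hkh, GInv_of_mul (D0_inv.pow _) (pow_ne_zero _ D0_ne) h2⟩, ?_⟩
    rw [mD_apply, hk]

theorem mD_mem {e n : ℕ} {f : MM} (hf : f ∈ Inv F e) :
    mD F n f ∈ Inv F (n * (qq ^ 2 - 1) + e) := by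
  refine ⟨?_, (D0_inv.pow n).mul hf.2⟩
  rw [mul_comm]
  exact (D0_hom.pow n).mul hf.1

theorem finrank_map_mD (n : ℕ) (W : Submodule F MM) :
    Module.finrank F (W.map (mD F n)) = Module.finrank F W :=
  (Submodule.equivMapOfInjective _ (mD_inj n) W).finrank_eq.symm

/-- evaluation at `(1,0)` -/
noncomputable def rho (F : Type) [Field F] : MvPolynomial (Fin 2) F →ₗ[F] F :=
  (MvPolynomial.aeval (![1, 0] : Fin 2 → F)).toLinearMap

theorem rho_apply (f : MM) : rho F f = MvPolynomial.aeval (![1, 0] : Fin 2 → F) f := rfl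

/-- Rank of a functional on a subspace. -/
theorem finrank_functional {V : Type} [AddCommGroup V] [Module F V]
    (W : Submodule F MM) [FiniteDimensional F W] (φ : MM →ₗ[F] V) :
    Module.finrank F W = Module.finrank F (W ⊓ LinearMap.ker φ : Submodule F MM) +
      Module.finrank F (W.map φ) := by
  have h := LinearMap.finrank_range_add_finrank_ker (φ.domRestrict W)
  rw [← h, LinearMap.range_domRestrict, add_comm]
  congr 1
  have : (LinearMap.ker (φ.domRestrict W)).map W.subtype = W ⊓ LinearMap.ker φ := by
    ext f; simp [and_comm]
  rw [← this, Submodule.finrank_map_subtype_eq]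

theorem finrank_map_one {W : Submodule F MM} {φ : MM →ₗ[F] F} {f : MM} (hf : f ∈ W)
    (h : φ f ≠ 0) : Module.finrank F (W.map φ) = 1 := by
  have : W.map φ = ⊤ := by
    rw [Submodule.eq_top_iff']
    intro c
    refine ⟨(c * (φ f)⁻¹) • f, W.smul_mem _ hf, ?_⟩
    rw [map_smul, smul_eq_mul, mul_assoc, inv_mul_cancel₀ h, mul_one]
  rw [this, finrank_top, Module.finrank_self]

theorem finrank_map_zero {W : Submodule F MM} {φ : MM →ₗ[F] F} (h : ∀ f ∈ W, φ f = 0) :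
    Module.finrank F (W.map φ) = 0 := by
  have : W.map φ = ⊥ := by
    rw [Submodule.eq_bot_iff]
    rintro _ ⟨f, hf, rfl⟩
    exact h f hf
  rw [this, finrank_bot]

theorem Inv_rec (e : ℕ) : Module.finrank F (Inv F e) =
    (if qq ^ 2 - qq ∣ e then 1 else 0) +
    (if qq ^ 2 - 1 ≤ e then Module.finrank F (Inv F (e - (qq ^ 2 - 1))) else 0) := by
  rw [finrank_functional (Inv F e) (rho F), add_comm]
  have hker : ∀ f ∈ Inv F e ⊓ LinearMap.ker (rho F), f = 0 ∨ (qq ^ 2 - 1 ≤ e ∧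
      f ∈ (Inv F (e - (qq ^ 2 - 1))).map (mD F 1)) := by
    rintro f ⟨h1, h2⟩
    have h3 : yy ∣ f := yy_dvd_of_eval h1.1 h2
    have := Inv_dvd (n := 0) h1 (by simpa using h3)
    simpa using this
  congr 1
  · split_ifs with hd
    · obtain ⟨k, rfl⟩ := hd
      apply finrank_map_one (f := D1 F ^ k) (mem_Inv.2 ⟨D1_hom.pow k, D1_inv.pow k⟩)
      rw [rho_apply, map_pow, D1_eval, one_pow]
      exact one_ne_zero
    · apply finrank_map_zero
      intro f hf
      by_contra h0
      exact hd (hf.2.dvd_of_ne hf.1 h0)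
  · split_ifs with hle
    · have heq : Inv F e ⊓ LinearMap.ker (rho F) =
          (Inv F (e - (qq ^ 2 - 1))).map (mD F 1) := by
        apply le_antisymm
        · intro f hf
          rcases hker f hf with rfl | h
          · exact zero_mem _
          · exact h.2
        · rintro _ ⟨k, hk, rfl⟩
          have h1 := mD_mem (n := 1) hk
          rw [one_mul, Nat.add_sub_cancel' hle] at h1
          refine ⟨h1, ?_⟩
          rw [SetLike.mem_coe, LinearMap.mem_ker, rho_apply, mD_apply, map_mul, map_pow, D0_eval]
          simp
      rw [heq, finrank_map_mD]
    · have : Inv F e ⊓ LinearMap.ker (rho F) = ⊥ := by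
        rw [Submodule.eq_bot_iff]
        intro f hf
        rcases hker f hf with h | h
        · exact h
        · exact absurd h.1 hle
      rw [this, finrank_bot]

/-! ### Dimension formula -/

theorem EE_mon (i j : ℕ) : EE (xx ^ i * yy ^ j : MM) =
    (if 0 < i ∧ qq - 1 ∣ i then -1 else 0) * (if 0 < j ∧ qq - 1 ∣ j then -1 else 0)
      - (if i = 0 ∧ j = 0 then 1 else 0) := by
  rw [EE_apply, sum_vec]
  congr 1
  · rw [← sum_pow_F, ← sum_pow_F, Finset.sum_mul_sum, Finset.sum_comm]
    simp
  · rcases Nat.eq_zero_or_pos i with rfl | hi <;> rcases Nat.eq_zero_or_pos j with rfl | hj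
    · simp
    · simp [hj.ne']
    · simp [hi.ne']
    · simp [hj.ne', hi.ne']

theorem mon_hom (i j : ℕ) : (xx ^ i * yy ^ j : MM).IsHomogeneous (i + j) :=
  (MvPolynomial.isHomogeneous_X_pow _ _).mul (MvPolynomial.isHomogeneous_X_pow _ _)

/-- homogeneous part -/
abbrev Sd (F : Type) [Field F] (d : ℕ) : Submodule F (MvPolynomial (Fin 2) F) :=
  MvPolynomial.homogeneousSubmodule (Fin 2) F d

theorem EE_zero {d : ℕ} (h : ¬ (d = 0 ∨ (2 * (qq - 1) ≤ d ∧ qq - 1 ∣ d))) {f : MM}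
    (hf : f ∈ Sd F d) : EE f = 0 := by
  rw [← MvPolynomial.support_sum_monomial_coeff f, map_sum]
  apply Finset.sum_eq_zero
  intro u hu
  have hd := hom_deg hf (MvPolynomial.mem_support_iff.1 hu)
  rw [monomial_eq', map_smul, EE_mon]
  have h1 : ¬ (u 0 = 0 ∧ u 1 = 0) := by
    rintro ⟨h1, h2⟩; apply h; left; omega
  rw [if_neg h1]
  have h2 : ¬ ((0 < u 0 ∧ qq - 1 ∣ u 0) ∧ (0 < u 1 ∧ qq - 1 ∣ u 1)) := by
    rintro ⟨⟨a, b⟩, c, e⟩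
    apply h; right
    have h3 := Nat.le_of_dvd a b
    have h4 := Nat.le_of_dvd c e
    exact ⟨by omega, hd ▸ Nat.dvd_add b e⟩
  rcases not_and_or.1 h2 with h3 | h3 <;> rw [if_neg h3] <;> simp

theorem rank_EE (d : ℕ) : Module.finrank F ((Sd F d).map (EE (F := F))) =
    if d = 0 ∨ (2 * (qq - 1) ≤ d ∧ qq - 1 ∣ d) then 1 else 0 := by
  have h2 := two_le_card (F := F)
  split_ifs with h
  · rcases h with rfl | ⟨h, hd⟩
    · have h0 := mon_hom (F := F) 0 0
      apply finrank_map_one (f := xx ^ 0 * yy ^ 0) h0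
      rw [EE_mon]; simp
    · have h0 := mon_hom (F := F) (qq - 1) (d - (qq - 1))
      rw [Nat.add_sub_cancel' (by omega)] at h0
      apply finrank_map_one (f := xx ^ (qq - 1) * yy ^ (d - (qq - 1))) h0
      rw [EE_mon, if_pos ⟨by omega, dvd_refl _⟩,
        if_pos ⟨by omega, Nat.dvd_sub hd (dvd_refl _)⟩, if_neg (by omega)]
      simp
  · exact finrank_map_zero (fun f hf => EE_zero h hf)

theorem TG_mem {d : ℕ} {f : MM} (hf : f ∈ Sd F d) : TG f ∈ Inv F d := by
  refine ⟨?_, fun g => lsub_TG g f⟩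
  rw [TG_apply]
  exact MvPolynomial.IsHomogeneous.sum _ _ _ (fun g _ => lsub_hom _ hf)

theorem TG_image (d : ℕ) : Module.finrank F ((Sd F d ⊓ LinearMap.ker (EE (F := F))).map TG) =
    if 2 * (qq ^ 2 - 1) ≤ d then Module.finrank F (Inv F (d - 2 * (qq ^ 2 - 1))) else 0 := by
  have h2 := two_le_card (F := F)
  have key : ∀ f ∈ Sd F d ⊓ LinearMap.ker (EE (F := F)), TG f = 0 ∨ (2 * (qq ^ 2 - 1) ≤ d ∧
      TG f ∈ (Inv F (d - 2 * (qq ^ 2 - 1))).map (mD F 2)) := by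
    rintro f ⟨h1, h3⟩
    obtain ⟨h, -, ⟨k, rfl⟩, -, h4⟩ := key_reduction h1 h3
    refine Inv_dvd (n := 1) (TG_mem h1) ?_
    rw [h4, mul_one, pow_succ]
    exact ⟨-k, by ring⟩
  split_ifs with hle
  · have heq : (Sd F d ⊓ LinearMap.ker (EE (F := F))).map TG =
        (Inv F (d - 2 * (qq ^ 2 - 1))).map (mD F 2) := by
      apply le_antisymm
      · rintro _ ⟨f, hf, rfl⟩
        rcases key f hf with h | h
        · rw [h]; exact zero_mem _
        · exact h.2
      · rintro _ ⟨k, ⟨hk1, hk2⟩, rfl⟩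
        refine ⟨(xx ^ (qq - 1) * Xq F ^ (qq - 1)) * (-(D0 F * k)), ⟨?_, ?_⟩, ?_⟩
        · have h5 := (((MvPolynomial.isHomogeneous_X_pow (R := F) (0 : Fin 2) (qq - 1)).mul
            (Xq_hom.pow (qq - 1)))).mul ((D0_hom.mul hk1).neg)
          convert h5 using 1
          have h6 : qq ^ 2 - 1 = (qq + 1) * (qq - 1) := by rw [← Nat.sq_sub_sq, one_pow]
          have h7 : qq - 1 + qq * (qq - 1) = qq ^ 2 - 1 := by rw [h6]; ring
          rw [h7, show qq ^ 2 - 1 + (qq ^ 2 - 1 + (d - 2 * (qq ^ 2 - 1))) = d by omega]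
          rfl
        · rw [SetLike.mem_coe, LinearMap.mem_ker, EE_apply]
          simp only [map_mul, map_neg, D0_eval, zero_mul, neg_zero, mul_zero,
            Finset.sum_const_zero, sub_self]
        · rw [TG_mul_inv, TG_f0, mD_apply]
          · ring
          · intro g; rw [map_neg, (D0_inv.mul hk2) g]
    rw [heq, finrank_map_mD]
  · have : (Sd F d ⊓ LinearMap.ker (EE (F := F))).map TG = ⊥ := by
      rw [Submodule.eq_bot_iff]
      rintro _ ⟨f, hf, rfl⟩
      rcases key f hf with h | h
      · exact h
      · exact absurd h.1 hle
    rw [this, finrank_bot]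

theorem dim_formula (d : ℕ) :
    Module.finrank F (↥(Sd F d) ⧸ Submodule.comap (Sd F d).subtype (NG F)) =
    (if d = 0 ∨ (2 * (qq - 1) ≤ d ∧ qq - 1 ∣ d) then 1 else 0) +
    if 2 * (qq ^ 2 - 1) ≤ d then Module.finrank F (Inv F (d - 2 * (qq ^ 2 - 1))) else 0 := by
  rw [← rank_EE, ← TG_image]
  have h1 := Submodule.finrank_quotient_add_finrank (Submodule.comap (Sd F d).subtype (NG F))
  have h2 := finrank_functional (Sd F d) (EE (F := F))
  have : FiniteDimensional F (Sd F d ⊓ LinearMap.ker (EE (F := F)) : Submodule F MM) :=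
    Submodule.finiteDimensional_of_le (inf_le_left : _ ≤ Sd F d)
  have h3 := finrank_functional (Sd F d ⊓ LinearMap.ker (EE (F := F))) (TG (F := F))
  have h4 : (Submodule.comap (Sd F d).subtype (NG F)).map (Sd F d).subtype =
      Sd F d ⊓ LinearMap.ker (EE (F := F)) ⊓ LinearMap.ker (TG (F := F)) := by
    rw [Submodule.map_comap_subtype]
    ext f
    simp only [Submodule.mem_inf, LinearMap.mem_ker, and_assoc]
    exact and_congr_right (fun hf => mem_NG_iff hf)
  have h5 := Submodule.finrank_map_subtype_eq (Sd F d) (Submodule.comap (Sd F d).subtype (NG F))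
  rw [h4] at h5
  omega

/-! ### Power series -/

theorem const_ne {n : ℕ} (hn : 1 ≤ n) :
    PowerSeries.constantCoeff (1 - (PowerSeries.X : PowerSeries ℚ) ^ n) ≠ 0 := by
  rw [map_sub, map_pow, PowerSeries.constantCoeff_X, zero_pow (by omega)]
  simp

theorem geom_inv {n : ℕ} (hn : 1 ≤ n) : (1 - (PowerSeries.X : PowerSeries ℚ) ^ n)⁻¹ =
    PowerSeries.mk (fun d => if n ∣ d then (1 : ℚ) else 0) := by
  rw [PowerSeries.inv_eq_iff_mul_eq_one (const_ne hn)]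
  ext d
  rw [mul_sub, mul_one, map_sub, PowerSeries.coeff_mul_X_pow', PowerSeries.coeff_mk,
    PowerSeries.coeff_one]
  rcases Nat.eq_zero_or_pos d with rfl | hd
  · rw [if_neg (by omega : ¬ n ≤ 0)]; simp
  · rw [if_neg hd.ne']
    split_ifs with h1 h2 h2
    · rw [PowerSeries.coeff_mk, if_pos (Nat.dvd_sub h1 (dvd_refl _))]; simp
    · exact absurd (Nat.le_of_dvd hd h1) h2
    · rw [PowerSeries.coeff_mk, if_neg]
      · simp
      · intro h3; apply h1
        have := Nat.dvd_add h3 (dvd_refl n)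
        rwa [Nat.sub_add_cancel h2] at this
    · simp

theorem series_rec {n m : ℕ} (hn : 1 ≤ n) (hm : 1 ≤ m) (A : ℕ → ℕ)
    (hA : ∀ e, A e = (if m ∣ e then 1 else 0) + (if n ≤ e then A (e - n) else 0)) :
    (1 - (PowerSeries.X : PowerSeries ℚ) ^ n)⁻¹ * (1 - (PowerSeries.X : PowerSeries ℚ) ^ m)⁻¹ =
    PowerSeries.mk (fun d => (A d : ℚ)) := by
  rw [mul_comm]
  symm
  rw [PowerSeries.eq_mul_inv_iff_mul_eq (const_ne hn), geom_inv hm]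
  ext d
  rw [mul_sub, mul_one, map_sub, PowerSeries.coeff_mul_X_pow', PowerSeries.coeff_mk,
    PowerSeries.coeff_mk, PowerSeries.coeff_mk, hA d]
  split_ifs <;> simp

theorem main_thm : hilbQuot F (NG F) = 1 +
        (PowerSeries.X : PowerSeries ℚ) ^ (2 * (qq - 1)) *
          (1 - (PowerSeries.X : PowerSeries ℚ) ^ (qq - 1))⁻¹ +
        (PowerSeries.X : PowerSeries ℚ) ^ (2 * (qq ^ 2 - 1)) *
          ((1 - (PowerSeries.X : PowerSeries ℚ) ^ (qq ^ 2 - 1))⁻¹ *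
            (1 - (PowerSeries.X : PowerSeries ℚ) ^ (qq ^ 2 - qq))⁻¹) := by
  have h2 := two_le_card (F := F)
  have h3 : qq * 2 ≤ qq ^ 2 := by rw [pow_two]; exact Nat.mul_le_mul_left _ h2
  rw [series_rec (by omega) (by omega) (fun e => Module.finrank F (Inv F e)) Inv_rec,
    geom_inv (by omega)]
  ext d
  rw [hilbQuot, PowerSeries.coeff_mk, dim_formula, map_add, map_add, PowerSeries.coeff_one,
    PowerSeries.coeff_X_pow_mul', PowerSeries.coeff_X_pow_mul', PowerSeries.coeff_mk,
    PowerSeries.coeff_mk]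
  push_cast
  congr 1
  · rcases Nat.eq_zero_or_pos d with rfl | hd
    · rw [if_pos (Or.inl rfl), if_pos rfl, if_neg (by omega)]; simp
    · rw [if_neg hd.ne', zero_add]
      by_cases hle : 2 * (qq - 1) ≤ d
      · have : qq - 1 ∣ d - 2 * (qq - 1) ↔ qq - 1 ∣ d :=
          Nat.dvd_sub_iff_left hle (dvd_mul_left _ _)
        simp [hle, hd.ne', this]
      · simp [hle, hd.ne']

end GLCofixed

/-- Theorem: the `GL_2(F_q)`-cofixed space `S_G` of `S = F_q[x,y]` has Hilbert series
`1 + t^{2(q−1)}/(1−t^{q−1}) + t^{2(q²−1)}/((1−t^{q²−1})(1−t^{q²−q}))`. -/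
theorem statement18 (q : ℕ) (hq : IsPrimePow q) (Fq : Type) [Field Fq] [Fintype Fq]
    (hcard : Fintype.card Fq = q) :
    hilbQuot Fq (NG Fq)
      = 1 +
        (PowerSeries.X : PowerSeries ℚ) ^ (2 * (q - 1)) *
          (1 - (PowerSeries.X : PowerSeries ℚ) ^ (q - 1))⁻¹ +
        (PowerSeries.X : PowerSeries ℚ) ^ (2 * (q ^ 2 - 1)) *
          ((1 - (PowerSeries.X : PowerSeries ℚ) ^ (q ^ 2 - 1))⁻¹ *
            (1 - (PowerSeries.X : PowerSeries ℚ) ^ (q ^ 2 - q))⁻¹) := by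
  classical
  subst hcard
  exact GLCofixed.main_thm
end
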